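/- arXiv:1808.00213 — 13 statements merged into one kernel-verified Lean document; each statement's English description precedes it below -/
import Mathlib

section
/- Let n ∈ ℕ, let U ⊆ ℝⁿ be a convex set (ℝⁿ with the Euclidean norm ‖·‖), let γ ≥ 0, and let Φ : ℝⁿ × ℝⁿ → (ℝⁿ → ℝⁿ) be a two-parameter family of maps such that for all x ∈ U and all y̌, ŷ, ž, ẑ ∈ U one has ‖Φ(ž,ẑ)(x) − Φ(y̌,ŷ)(x)‖ ≤ γ · max( ‖ẑ − ŷ‖ · max(‖x − y̌‖, ‖x − ž‖), ‖ž − y̌‖ · max(‖x − ŷ‖, ‖x − ẑ‖) ). Then for all x, ẙ, ž, ẑ ∈ U the refined bound holds: ‖Φ(ž,ẑ)(x) − Φ(ẙ,ẙ)(x)‖ ≤ γ · ( max(‖ẑ − ẙ‖, ‖ž − ẙ‖) · ‖x − ẙ‖ + (1/2) · ‖ẑ − ẙ‖ · ‖ž − ẙ‖ ). -/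
/-!
Move both reference points simultaneously along the segments from `yr` to `zc` and to `zh`,
in `N` equal steps. With `a = ‖zh - yr‖`, `b = ‖zc - yr‖` and `d = ‖x - yr‖`, the reference points
at time `t` are within `d + t * b` and `d + t * a` of `x`, so the hypothesis bounds the
change of the model over the step ending at `t = (k + 1) / N` by
`γ * (max a b * d + t * (a * b)) / N`. Summing the increments gives
`γ * (max a b * d + a * b * (N + 1) / (2 * N))` (a Riemann sum for `∫₀¹ t dt = 1 / 2`), and
`N → ∞` gives the refined bound.
-/

/-- A point at time at most `t` on the ray from `y` with velocity `v` is within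
`‖x - y‖ + t * ‖v‖` of `x`. -/
theorem norm_sub_add_smul_le {E : Type*} [NormedAddCommGroup E] [NormedSpace ℝ E]
    (x y v : E) {s t : ℝ} (hs : 0 ≤ s) (hst : s ≤ t) :
    ‖x - (y + s • v)‖ ≤ ‖x - y‖ + t * ‖v‖ := by
  calc ‖x - (y + s • v)‖ = ‖(x - y) - s • v‖ := by rw [sub_add_eq_sub_sub]
    _ ≤ ‖x - y‖ + ‖s • v‖ := norm_sub_le _ _
    _ = ‖x - y‖ + s * ‖v‖ := by rw [norm_smul, Real.norm_of_nonneg hs]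
    _ ≤ ‖x - y‖ + t * ‖v‖ := by gcongr

theorem norm_add_smul_sub_add_smul {E : Type*} [NormedAddCommGroup E] [NormedSpace ℝ E]
    (y v : E) {s t : ℝ} (hst : s ≤ t) :
    ‖(y + t • v) - (y + s • v)‖ = (t - s) * ‖v‖ := by
  rw [add_sub_add_left_eq_sub, ← sub_smul, norm_smul, Real.norm_of_nonneg (sub_nonneg.2 hst)]

/-- Refinement for the distance between piecewise linearizations
(Lemma "Refinement" of the paper): if the two-parameter family `Φ` of local
models satisfies the Lipschitz dependence on reference points (Prop. 1.2),
then the refined bound against a tangent-mode model holds. -/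
theorem refinement_distance_piecewise_linearizations
    (n : ℕ) (U : Set (EuclideanSpace ℝ (Fin n))) (hU : Convex ℝ U)
    (γ : ℝ) (hγ : 0 ≤ γ)
    (Φ : EuclideanSpace ℝ (Fin n) → EuclideanSpace ℝ (Fin n) →
      (EuclideanSpace ℝ (Fin n) → EuclideanSpace ℝ (Fin n)))
    (hΦ : ∀ x ∈ U, ∀ yc ∈ U, ∀ yh ∈ U, ∀ zc ∈ U, ∀ zh ∈ U,
      ‖Φ zc zh x - Φ yc yh x‖ ≤
        γ * max (‖zh - yh‖ * max ‖x - yc‖ ‖x - zc‖)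
                (‖zc - yc‖ * max ‖x - yh‖ ‖x - zh‖)) :
    ∀ x ∈ U, ∀ yr ∈ U, ∀ zc ∈ U, ∀ zh ∈ U,
      ‖Φ zc zh x - Φ yr yr x‖ ≤
        γ * (max ‖zh - yr‖ ‖zc - yr‖ * ‖x - yr‖ + (1 / 2) * ‖zh - yr‖ * ‖zc - yr‖) := by
  intro x hx yr hy zc hzc zh hzh
  have hmem : ∀ z ∈ U, ∀ t : ℝ, 0 ≤ t → t ≤ 1 → yr + t • (z - yr) ∈ U :=
    fun z hz t h0 h1 => hU.add_smul_sub_mem hy hz ⟨h0, h1⟩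
  set a := ‖zh - yr‖ with ha
  set b := ‖zc - yr‖ with hb
  set d := ‖x - yr‖ with hd
  have ha0 : 0 ≤ a := norm_nonneg _
  have hb0 : 0 ≤ b := norm_nonneg _
  have hd0 : 0 ≤ d := norm_nonneg _
  have step : ∀ s t : ℝ, 0 ≤ s → s ≤ t → t ≤ 1 →
      ‖Φ (yr + t • (zc - yr)) (yr + t • (zh - yr)) x
        - Φ (yr + s • (zc - yr)) (yr + s • (zh - yr)) x‖ ≤
      γ * ((t - s) * (max a b * d + t * (a * b))) := by
    intro s t hs hst ht
    have ht0 := hs.trans hst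
    have hs1 := hst.trans ht
    refine (hΦ x hx _ (hmem zc hzc s hs hs1) _ (hmem zh hzh s hs hs1)
      _ (hmem zc hzc t ht0 ht) _ (hmem zh hzh t ht0 ht)).trans ?_
    refine mul_le_mul_of_nonneg_left ?_ hγ
    rw [norm_add_smul_sub_add_smul _ _ hst, norm_add_smul_sub_add_smul _ _ hst, ← ha, ← hb]
    have hts : 0 ≤ t - s := sub_nonneg.2 hst
    refine max_le ?_ ?_
    · calc (t - s) * a * _ ≤ (t - s) * a * (d + t * b) :=
            mul_le_mul_of_nonneg_left (max_le (norm_sub_add_smul_le _ _ _ hs hst)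
              (norm_sub_add_smul_le _ _ _ ht0 le_rfl)) (by positivity)
        _ = (t - s) * (a * d + t * (a * b)) := by ring
        _ ≤ _ := by gcongr; exact le_max_left _ _
    · calc (t - s) * b * _ ≤ (t - s) * b * (d + t * a) :=
            mul_le_mul_of_nonneg_left (max_le (norm_sub_add_smul_le _ _ _ hs hst)
              (norm_sub_add_smul_le _ _ _ ht0 le_rfl)) (by positivity)
        _ = (t - s) * (b * d + t * (a * b)) := by ring
        _ ≤ _ := by gcongr; exact le_max_right _ _
  -- The increments telescope: `∑ (j + 1) = k * (k + 1) / 2` over `j < k`.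
  have partial_sum : ∀ N : ℕ, 0 < N → ∀ k : ℕ, k ≤ N →
      ‖Φ (yr + ((k : ℝ) / N) • (zc - yr)) (yr + ((k : ℝ) / N) • (zh - yr)) x - Φ yr yr x‖ ≤
      γ * ((k / N) * (max a b * d) + (k * (k + 1) / (2 * N ^ 2)) * (a * b)) := by
    intro N hN k
    have hN' : (0 : ℝ) < N := by exact_mod_cast hN
    induction k with
    | zero => simp
    | succ k ih =>
      intro hk
      have h1 := ih (by omega)
      have h2 := step ((k : ℝ) / N) (((k + 1 : ℕ) : ℝ) / N) (by positivity)
        (by gcongr; omega) ((div_le_one hN').2 (by exact_mod_cast hk))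
      refine (norm_sub_le_norm_sub_add_norm_sub _ _ _).trans ((add_le_add h2 h1).trans_eq ?_)
      push_cast
      field_simp
      ring
  have bound : ∀ m : ℕ, ‖Φ zc zh x - Φ yr yr x‖ ≤
      γ * (max a b * d + (1 / 2) * a * b) + (1 / ((m : ℝ) + 1)) * (γ * (a * b) / 2) := by
    intro m
    have h := partial_sum (m + 1) m.succ_pos (m + 1) le_rfl
    have hm : ((m + 1 : ℕ) : ℝ) ≠ 0 := by positivity
    rw [div_self hm, one_smul, one_smul, add_sub_cancel, add_sub_cancel] at h
    refine h.trans_eq ?_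
    push_cast at hm ⊢
    field_simp
    ring
  have lim := ((tendsto_one_div_add_atTop_nhds_zero_nat (𝕜 := ℝ)).mul_const
    (γ * (a * b) / 2)).const_add (γ * (max a b * d + (1 / 2) * a * b))
  rw [zero_mul, add_zero] at lim
  exact ge_of_tendsto' lim bound
end

section
/- Let n ∈ ℕ, x* ∈ ℝⁿ, and c, γ, R̃ > 0. Let Φ : ℝⁿ × ℝⁿ → (ℝⁿ → ℝⁿ) be a two-parameter family of maps that is c-metrically regular for x* on B̄(x*,R̃) and γ-stable at x* on B̄(x*,R̃). Set R = min(R̃/3, 2/(3cγ)). Then for all x̌, x̂ ∈ B̄(x*,R), every x ∈ B̄(x*,R̃) with Φ(x̌,x̂)(x) = 0 satisfies ‖x − x*‖ ≤ max(‖x̌ − x*‖, ‖x̂ − x*‖) ≤ R. In particular, any root of the local model Φ(x̌,x̂) inside B̄(x*,R̃) lies in B̄(x*,R), so the iteration is contractive on B̄(x*,R). -/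
/-!
At a root `x` of the local model at `(xc, xh)`, stability bounds `‖Φ xs xs x‖`, and regularity turns
this into `t ≤ c * γ * (m * t + m ^ 2 / 2)`, where `t = ‖x - xs‖` and `m` is the larger of the
distances of `xc` and `xh` from `xs`. The choice of `R` gives `c * γ * m ≤ 2 / 3`, hence
`t ≤ 2 / 3 * t + m / 3`, that is, `t ≤ m`.
-/

open Metric

/-- Contractivity (Proposition 3.5 of the paper): under metric regularity of the
tangent-mode model at the root and Lipschitz stability of the local models,
every root of a perturbed local model with reference points in `B̄(x*,R)`
that lies in `B̄(x*,R̃)` in fact lies in `B̄(x*,R)`, with the contractive bound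
`‖x − x*‖ ≤ max(‖x̌ − x*‖, ‖x̂ − x*‖) ≤ R`. -/
theorem contractivity_of_generalized_newton
    (n : ℕ) (xs : EuclideanSpace ℝ (Fin n)) (c γ Rt : ℝ)
    (hc : 0 < c) (hγ : 0 < γ) (hRt : 0 < Rt)
    (Φ : EuclideanSpace ℝ (Fin n) → EuclideanSpace ℝ (Fin n) →
      (EuclideanSpace ℝ (Fin n) → EuclideanSpace ℝ (Fin n)))
    (hreg : ∀ x ∈ closedBall xs Rt, ‖x - xs‖ ≤ c * ‖Φ xs xs x‖)
    (hstab : ∀ x ∈ closedBall xs Rt, ∀ zc ∈ closedBall xs Rt, ∀ zh ∈ closedBall xs Rt,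
      ‖Φ zc zh x - Φ xs xs x‖ ≤
        γ * (max ‖zc - xs‖ ‖zh - xs‖ * ‖x - xs‖ + (1 / 2) * ‖zc - xs‖ * ‖zh - xs‖))
    (R : ℝ) (hR : R = min (Rt / 3) (2 / (3 * c * γ))) :
    ∀ xc ∈ closedBall xs R, ∀ xh ∈ closedBall xs R, ∀ x ∈ closedBall xs Rt,
      Φ xc xh x = 0 →
        ‖x - xs‖ ≤ max ‖xc - xs‖ ‖xh - xs‖ ∧ max ‖xc - xs‖ ‖xh - xs‖ ≤ R := by
  intro xc hxc xh hxh x hx h0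
  rw [mem_closedBall, dist_eq_norm] at hxc hxh
  have hR1 : R ≤ Rt / 3 := hR ▸ min_le_left _ _
  have hR2 : R ≤ 2 / (3 * c * γ) := hR ▸ min_le_right _ _
  have hmR : max ‖xc - xs‖ ‖xh - xs‖ ≤ R := max_le hxc hxh
  refine ⟨?_, hmR⟩
  have hs := hstab x hx xc (by rw [mem_closedBall, dist_eq_norm]; linarith)
    xh (by rw [mem_closedBall, dist_eq_norm]; linarith)
  rw [h0, zero_sub, norm_neg] at hs
  have hr := hreg x hx
  have ha : ‖xc - xs‖ ≤ max ‖xc - xs‖ ‖xh - xs‖ := le_max_left _ _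
  have hb : ‖xh - xs‖ ≤ max ‖xc - xs‖ ‖xh - xs‖ := le_max_right _ _
  have ha0 := norm_nonneg (xc - xs)
  have hb0 := norm_nonneg (xh - xs)
  have ht0 := norm_nonneg (x - xs)
  generalize max ‖xc - xs‖ ‖xh - xs‖ = m at *
  generalize ‖x - xs‖ = t at *
  have hm0 : 0 ≤ m := ha0.trans ha
  have hab : ‖xc - xs‖ * ‖xh - xs‖ ≤ m * m := mul_le_mul ha hb hb0 hm0
  have hk : c * γ * m ≤ 2 / 3 := by
    have h := (le_div_iff₀ (by positivity)).1 (hmR.trans hR2)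
    linarith
  have hmain : t ≤ c * (γ * (m * t + 1 / 2 * (m * m))) := by
    refine hr.trans (mul_le_mul_of_nonneg_left (hs.trans ?_) hc.le)
    refine mul_le_mul_of_nonneg_left ?_ hγ.le
    linarith
  -- With `k = c * γ * m ≤ 2 / 3`, the bound reads `t ≤ k * t + k * m / 2 ≤ 2 / 3 * t + m / 3`.
  have h1 := mul_le_mul_of_nonneg_right hk ht0
  have h2 := mul_le_mul_of_nonneg_right hk hm0
  linarith
end

section
/- Let n ∈ ℕ, x* ∈ ℝⁿ, and c, γ, R̃ > 0. Let Φ : ℝⁿ × ℝⁿ → (ℝⁿ → ℝⁿ) be a two-parameter family of maps that is c-metrically regular for x* on B̄(x*,R̃) and γ-stable at x* on B̄(x*,R̃). Set R = min(R̃/3, 2/(3cγ)). Then for all x̌, x̂ ∈ B̄(x*,R), every x ∈ B̄(x*,R̃) with Φ(x̌,x̂)(x) = 0 satisfies the product error bound ‖x − x*‖ ≤ (3cγ/2)·‖x̌ − x*‖·‖x̂ − x*‖ ≤ (1/R)·‖x̌ − x*‖·‖x̂ − x*‖. -/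
/-!
At a root `x` of the local model, stability bounds `‖Φ xs xs x‖`, and metric regularity turns
this into `‖x - xs‖ ≤ c γ (m ‖x - xs‖ + ‖xc - xs‖ ‖xh - xs‖ / 2)`, where `m ≤ R` is the larger
of the two reference distances. Since `R ≤ 2 / (3 c γ)`, the first term is at most
`(2 / 3) ‖x - xs‖`; absorbing it on the left leaves the factor `3 c γ / 2`, and the same bound
on `R` says that this factor is at most `1 / R`.
-/

open Metric

/-- The per-step error estimate underlying the quadratic / super-linear
convergence theorem of the paper: under metric regularity and stability,
any root `x ∈ B̄(x*,R̃)` of the local model with reference points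
`x̌, x̂ ∈ B̄(x*,R)` satisfies the product error bound
`‖x − x*‖ ≤ (3cγ/2)·‖x̌ − x*‖·‖x̂ − x*‖ ≤ (1/R)·‖x̌ − x*‖·‖x̂ − x*‖`. -/
theorem newton_step_product_error_bound
    (n : ℕ) (xs : EuclideanSpace ℝ (Fin n)) (c γ Rt : ℝ)
    (hc : 0 < c) (hγ : 0 < γ) (hRt : 0 < Rt)
    (Φ : EuclideanSpace ℝ (Fin n) → EuclideanSpace ℝ (Fin n) →
      (EuclideanSpace ℝ (Fin n) → EuclideanSpace ℝ (Fin n)))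
    (hreg : ∀ x ∈ closedBall xs Rt, ‖x - xs‖ ≤ c * ‖Φ xs xs x‖)
    (hstab : ∀ x ∈ closedBall xs Rt, ∀ zc ∈ closedBall xs Rt, ∀ zh ∈ closedBall xs Rt,
      ‖Φ zc zh x - Φ xs xs x‖ ≤
        γ * (max ‖zc - xs‖ ‖zh - xs‖ * ‖x - xs‖ + (1 / 2) * ‖zc - xs‖ * ‖zh - xs‖))
    (R : ℝ) (hR : R = min (Rt / 3) (2 / (3 * c * γ))) :
    ∀ xc ∈ closedBall xs R, ∀ xh ∈ closedBall xs R, ∀ x ∈ closedBall xs Rt,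
      Φ xc xh x = 0 →
        ‖x - xs‖ ≤ 3 * c * γ / 2 * (‖xc - xs‖ * ‖xh - xs‖) ∧
        3 * c * γ / 2 * (‖xc - xs‖ * ‖xh - xs‖) ≤ 1 / R * (‖xc - xs‖ * ‖xh - xs‖) := by
  intro xc hxc xh hxh x hx h0
  have hcγ : 0 < c * γ := mul_pos hc hγ
  have hRpos : 0 < R := by rw [hR]; positivity
  have hRle : R ≤ Rt := by
    have : R ≤ Rt / 3 := hR ▸ min_le_left _ _
    linarith
  have hRc : c * γ * R ≤ 2 / 3 := by
    have h : R ≤ 2 / (3 * c * γ) := hR ▸ min_le_right _ _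
    rw [le_div_iff₀ (by positivity)] at h
    linarith
  have hs := hstab x hx xc (closedBall_subset_closedBall hRle hxc)
    xh (closedBall_subset_closedBall hRle hxh)
  rw [h0, zero_sub, norm_neg] at hs
  have hmax : max ‖xc - xs‖ ‖xh - xs‖ ≤ R :=
    max_le (mem_closedBall_iff_norm.mp hxc) (mem_closedBall_iff_norm.mp hxh)
  have hbound := (hreg x hx).trans (mul_le_mul_of_nonneg_left hs hc.le)
  -- The coefficient of `‖x - xs‖` on the right of `hbound` is at most `2 / 3`,
  -- so that term can be absorbed into the left-hand side.
  have hcoef : c * γ * max ‖xc - xs‖ ‖xh - xs‖ ≤ 2 / 3 :=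
    (mul_le_mul_of_nonneg_left hmax hcγ.le).trans hRc
  have habsorb := mul_le_mul_of_nonneg_right hcoef (norm_nonneg (x - xs))
  refine ⟨by linarith, mul_le_mul_of_nonneg_right ?_ (by positivity)⟩
  rw [le_div_iff₀ hRpos]
  linarith
end

section
/- Let n ∈ ℕ, x* ∈ ℝⁿ, and c, γ, R̃ > 0. Let Φ : ℝⁿ × ℝⁿ → (ℝⁿ → ℝⁿ) be a two-parameter family of maps that is c-metrically regular for x* on B̄(x*,R̃) and γ-stable at x* on B̄(x*,R̃), and set R = min(R̃/3, 2/(3cγ)). Let (x_j)_{j≥0} be a sequence in ℝⁿ with ‖x_0 − x*‖ < R such that for every j ≥ 0 the point x_{j+1} lies in B̄(x*,R̃) and satisfies Φ(x_j,x_j)(x_{j+1}) = 0 (a tangent-mode Newton iteration). Then for all j: x_j ∈ B̄(x*,R), ‖x_{j+1} − x*‖ ≤ (1/R)·‖x_j − x*‖², and ‖x_j − x*‖ ≤ R·(‖x_0 − x*‖/R)^{2^j}; in particular x_j converges (quadratically) to x*. -/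
/-!
With `e j = ‖x j - xs‖`, metric regularity at `x (j + 1)`, the equation
`Φ (x j) (x j) (x (j + 1)) = 0` and stability give the implicit estimate
`e (j + 1) ≤ c γ (e j * e (j + 1) + e j ^ 2 / 2)`. Since `c γ R ≤ 2 / 3`, the term containing
`e (j + 1)` on the right is absorbed as long as `e j < R`, which leaves
`e (j + 1) ≤ e j ^ 2 / R` (`newton_error_absorb`) and hence `e (j + 1) < R` again.
Iterating, `e j / R ≤ (e 0 / R) ^ 2 ^ j`, which tends to `0` because `e 0 / R < 1`.
-/

open Metric Filter

/-- Absorption step: with `k = c γ`, the implicit error recursion becomes explicit, because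
`k * a ≤ 2 / 3` leaves at least a third of `b` on the left. -/
lemma newton_error_absorb {k R a b : ℝ} (hk : 0 ≤ k) (hR : 0 < R) (hkR : k * R ≤ 2 / 3)
    (hb : 0 ≤ b) (haR : a ≤ R) (h : b ≤ k * (a * b + 1 / 2 * a * a)) :
    b ≤ 1 / R * a ^ 2 := by
  have hka : k * a ≤ 2 / 3 := (mul_le_mul_of_nonneg_left haR hk).trans hkR
  have h1 : k * a * b ≤ 2 / 3 * b := mul_le_mul_of_nonneg_right hka hb
  have h2 : b ≤ 3 / 2 * k * a ^ 2 := by nlinarith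
  have h3 : k * R * a ^ 2 ≤ 2 / 3 * a ^ 2 := mul_le_mul_of_nonneg_right hkR (sq_nonneg a)
  have h4 : b * R ≤ 3 / 2 * k * a ^ 2 * R := mul_le_mul_of_nonneg_right h2 hR.le
  rw [one_div_mul_eq_div, le_div_iff₀ hR]
  linarith

/-- Tangent-mode part of the paper's main convergence theorem (Theorem 3.6):
the tangent-mode generalized Newton iteration started in the open ball of
radius `R` about the root stays in `B̄(x*,R)`, contracts quadratically, and
converges to the root `x*`. -/
theorem tangent_mode_newton_quadratic_convergence
    (n : ℕ) (xs : EuclideanSpace ℝ (Fin n)) (c γ Rt : ℝ)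
    (hc : 0 < c) (hγ : 0 < γ) (hRt : 0 < Rt)
    (Φ : EuclideanSpace ℝ (Fin n) → EuclideanSpace ℝ (Fin n) →
      (EuclideanSpace ℝ (Fin n) → EuclideanSpace ℝ (Fin n)))
    (hreg : ∀ x ∈ closedBall xs Rt, ‖x - xs‖ ≤ c * ‖Φ xs xs x‖)
    (hstab : ∀ x ∈ closedBall xs Rt, ∀ zc ∈ closedBall xs Rt, ∀ zh ∈ closedBall xs Rt,
      ‖Φ zc zh x - Φ xs xs x‖ ≤
        γ * (max ‖zc - xs‖ ‖zh - xs‖ * ‖x - xs‖ + (1 / 2) * ‖zc - xs‖ * ‖zh - xs‖))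
    (R : ℝ) (hR : R = min (Rt / 3) (2 / (3 * c * γ)))
    (x : ℕ → EuclideanSpace ℝ (Fin n))
    (h0 : ‖x 0 - xs‖ < R)
    (hstep : ∀ j : ℕ, x (j + 1) ∈ closedBall xs Rt ∧ Φ (x j) (x j) (x (j + 1)) = 0) :
    (∀ j : ℕ, x j ∈ closedBall xs R) ∧
    (∀ j : ℕ, ‖x (j + 1) - xs‖ ≤ 1 / R * ‖x j - xs‖ ^ 2) ∧
    (∀ j : ℕ, ‖x j - xs‖ ≤ R * (‖x 0 - xs‖ / R) ^ (2 ^ j)) ∧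
    Tendsto x atTop (nhds xs) := by
  have hk : 0 < c * γ := mul_pos hc hγ
  have hRpos : 0 < R := by rw [hR]; positivity
  have hRRt : R ≤ Rt := by
    have : R ≤ Rt / 3 := hR ▸ min_le_left _ _
    linarith
  have hkR : c * γ * R ≤ 2 / 3 := by
    have h : R ≤ 2 / (3 * c * γ) := hR ▸ min_le_right _ _
    rw [le_div_iff₀ (by positivity)] at h
    linarith
  have key : ∀ j, ‖x j - xs‖ < R → ‖x (j + 1) - xs‖ ≤ 1 / R * ‖x j - xs‖ ^ 2 := by
    intro j hj
    obtain ⟨hmem, hzero⟩ := hstep j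
    have hxj : x j ∈ closedBall xs Rt := by
      rw [mem_closedBall, dist_eq_norm]
      exact hj.le.trans hRRt
    have hs := hstab _ hmem _ hxj _ hxj
    rw [hzero, zero_sub, norm_neg, max_self] at hs
    refine newton_error_absorb hk.le hRpos hkR (norm_nonneg _) hj.le ?_
    rw [mul_assoc c γ]
    exact (hreg _ hmem).trans (mul_le_mul_of_nonneg_left hs hc.le)
  have hlt : ∀ j, ‖x j - xs‖ < R := by
    intro j
    induction j with
    | zero => exact h0
    | succ j ih =>
      refine (key j ih).trans_lt ?_
      rw [one_div_mul_eq_div, div_lt_iff₀ hRpos, ← sq]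
      exact pow_lt_pow_left₀ ih (norm_nonneg _) two_ne_zero
  have hquad : ∀ j, ‖x j - xs‖ ≤ R * (‖x 0 - xs‖ / R) ^ (2 ^ j) := by
    intro j
    induction j with
    | zero => rw [pow_zero, pow_one, mul_div_cancel₀ _ hRpos.ne']
    | succ j ih =>
      calc ‖x (j + 1) - xs‖ ≤ 1 / R * ‖x j - xs‖ ^ 2 := key j (hlt j)
        _ ≤ 1 / R * (R * (‖x 0 - xs‖ / R) ^ (2 ^ j)) ^ 2 := by gcongr
        _ = R * (‖x 0 - xs‖ / R) ^ (2 ^ (j + 1)) := by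
          rw [pow_succ 2 j, pow_mul, mul_pow]
          field_simp
  refine ⟨fun j => ?_, fun j => key j (hlt j), hquad, ?_⟩
  · rw [mem_closedBall, dist_eq_norm]
    exact (hlt j).le
  · rw [tendsto_iff_norm_sub_tendsto_zero]
    refine squeeze_zero (fun j => norm_nonneg _) hquad ?_
    have hpow : Tendsto (fun j : ℕ => (‖x 0 - xs‖ / R) ^ (2 ^ j)) atTop (nhds 0) :=
      (tendsto_pow_atTop_nhds_zero_of_lt_one (by positivity)
        ((div_lt_one hRpos).2 h0)).comp (tendsto_pow_atTop_atTop_of_one_lt one_lt_two)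
    simpa using hpow.const_mul R
end

section
/- Let n ∈ ℕ, x* ∈ ℝⁿ, and c, γ, R̃ > 0. Let Φ : ℝⁿ × ℝⁿ → (ℝⁿ → ℝⁿ) be a two-parameter family of maps that is c-metrically regular for x* on B̄(x*,R̃) and γ-stable at x* on B̄(x*,R̃), and set R = min(R̃/3, 2/(3cγ)). Let (x_j)_{j≥0} be a sequence in ℝⁿ with ‖x_0 − x*‖ < R and ‖x_1 − x*‖ < R such that for every j ≥ 1 the point x_{j+1} lies in B̄(x*,R̃) and satisfies Φ(x_{j−1},x_j)(x_{j+1}) = 0 (a secant-mode Newton iteration). Then for all j ≥ 1: ‖x_{j+1} − x*‖ ≤ (1/R)·‖x_j − x*‖·‖x_{j−1} − x*‖; moreover, writing u = max(‖x_0 − x*‖, ‖x_1 − x*‖)/R < 1 and letting fib denote the Fibonacci sequence (fib(1) = fib(2) = 1, fib(j+2) = fib(j+1) + fib(j)), one has ‖x_j − x*‖ ≤ R·u^{fib(j+1)} for all j ≥ 0; in particular x_j converges to x* (with the golden mean as order). -/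
/-!
Metric regularity at the new iterate, where the local model vanishes, combined with stability gives
`d ≤ c γ (max a b · d + a b / 2)` for three consecutive errors `a`, `b`, `d`. When `a, b < R`, the
bound `R ≤ 2 / (3 c γ)` makes `c γ · max a b < 2 / 3`, so the `d` term on the right can be absorbed,
leaving `d ≤ (3 / 2) c γ a b ≤ a b / R` (`error_step`). In particular `d ≤ b < R`, so the argument
repeats along the sequence. Iterating the product recursion adds the exponents of `u`, which is the
Fibonacci recursion, and `u ^ fib (j + 1) → 0` because `0 ≤ u < 1`.
-/


open Metric Filter

/-- Absorbing the new error `d` into the left-hand side; `k` stands for the product `c γ`. -/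
lemma error_step {a b d k R : ℝ} (ha : 0 ≤ a) (hb : 0 ≤ b) (hd : 0 ≤ d) (hk : 0 < k)
    (hR : 0 < R) (hkR : k * R ≤ 2 / 3) (haR : a < R) (hbR : b < R)
    (h : d ≤ k * (max a b * d + (1 / 2) * a * b)) : d ≤ 1 / R * (b * a) := by
  have hM : k * max a b ≤ 2 / 3 :=
    (mul_le_mul_of_nonneg_left (max_lt haR hbR).le hk.le).trans hkR
  have h2 := mul_le_mul_of_nonneg_right hM hd
  have h3 : d ≤ 3 / 2 * k * (b * a) := by nlinarith
  have h4 : 3 / 2 * k ≤ 1 / R := by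
    rw [le_div_iff₀ hR]
    linarith
  exact h3.trans (mul_le_mul_of_nonneg_right h4 (mul_nonneg hb ha))

/-- Secant-mode part of the paper's main convergence theorem (Theorem 3.6):
the secant-mode generalized Newton iteration started with two points in the
open ball of radius `R` about the root satisfies the product error recursion
`‖x_{j+1} − x*‖ ≤ (1/R)·‖x_j − x*‖·‖x_{j−1} − x*‖`, obeys the Fibonacci bound
`‖x_j − x*‖ ≤ R·u^{fib(j+1)}` with `u = max(‖x_0 − x*‖, ‖x_1 − x*‖)/R < 1`,
and converges to the root (with the golden mean as order). -/
theorem secant_mode_newton_golden_mean_convergence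
    (n : ℕ) (xs : EuclideanSpace ℝ (Fin n)) (c γ Rt : ℝ)
    (hc : 0 < c) (hγ : 0 < γ) (hRt : 0 < Rt)
    (Φ : EuclideanSpace ℝ (Fin n) → EuclideanSpace ℝ (Fin n) →
      (EuclideanSpace ℝ (Fin n) → EuclideanSpace ℝ (Fin n)))
    (hreg : ∀ x ∈ closedBall xs Rt, ‖x - xs‖ ≤ c * ‖Φ xs xs x‖)
    (hstab : ∀ x ∈ closedBall xs Rt, ∀ zc ∈ closedBall xs Rt, ∀ zh ∈ closedBall xs Rt,
      ‖Φ zc zh x - Φ xs xs x‖ ≤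
        γ * (max ‖zc - xs‖ ‖zh - xs‖ * ‖x - xs‖ + (1 / 2) * ‖zc - xs‖ * ‖zh - xs‖))
    (R : ℝ) (hR : R = min (Rt / 3) (2 / (3 * c * γ)))
    (x : ℕ → EuclideanSpace ℝ (Fin n))
    (h0 : ‖x 0 - xs‖ < R) (h1 : ‖x 1 - xs‖ < R)
    (hstep : ∀ j : ℕ, 1 ≤ j →
      x (j + 1) ∈ closedBall xs Rt ∧ Φ (x (j - 1)) (x j) (x (j + 1)) = 0)
    (u : ℝ) (hu : u = max ‖x 0 - xs‖ ‖x 1 - xs‖ / R) :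
    u < 1 ∧
    (∀ j : ℕ, 1 ≤ j → ‖x (j + 1) - xs‖ ≤ 1 / R * (‖x j - xs‖ * ‖x (j - 1) - xs‖)) ∧
    (∀ j : ℕ, ‖x j - xs‖ ≤ R * u ^ Nat.fib (j + 1)) ∧
    Tendsto x atTop (nhds xs) := by
  have hR0 : 0 < R := by
    rw [hR]
    positivity
  have hRRt : R ≤ Rt := by
    have : R ≤ Rt / 3 := hR ▸ min_le_left _ _
    linarith
  have hkR : c * γ * R ≤ 2 / 3 := by
    have h : R ≤ 2 / (3 * c * γ) := hR ▸ min_le_right _ _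
    rw [le_div_iff₀ (by positivity)] at h
    linarith
  have hrec : ∀ j, ‖x j - xs‖ < R → ‖x (j + 1) - xs‖ < R →
      ‖x (j + 2) - xs‖ ≤ 1 / R * (‖x (j + 1) - xs‖ * ‖x j - xs‖) := by
    intro j ha hb
    obtain ⟨hmem, hz⟩ := hstep (j + 1) (Nat.le_add_left 1 j)
    rw [Nat.add_sub_cancel] at hz
    have hs := hstab _ hmem (x j) (mem_closedBall_iff_norm.2 (ha.le.trans hRRt))
      (x (j + 1)) (mem_closedBall_iff_norm.2 (hb.le.trans hRRt))
    rw [hz, zero_sub, norm_neg] at hs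
    refine error_step (norm_nonneg _) (norm_nonneg _) (norm_nonneg _) (mul_pos hc hγ) hR0 hkR
      ha hb ?_
    rw [mul_assoc c γ]
    exact (hreg _ hmem).trans (mul_le_mul_of_nonneg_left hs hc.le)
  have hball : ∀ j, ‖x j - xs‖ < R ∧ ‖x (j + 1) - xs‖ < R := by
    intro j
    induction j with
    | zero => exact ⟨h0, h1⟩
    | succ j ih =>
      refine ⟨ih.2, (hrec j ih.1 ih.2).trans_lt ?_⟩
      rw [one_div_mul_eq_div, div_lt_iff₀ hR0]
      exact mul_lt_mul'' ih.2 ih.1 (norm_nonneg _) (norm_nonneg _)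
  have hu1 : u < 1 := by
    rw [hu, div_lt_one hR0]
    exact max_lt h0 h1
  have hu0 : 0 ≤ u := by
    rw [hu]
    positivity
  have hRu : R * u = max ‖x 0 - xs‖ ‖x 1 - xs‖ := by
    rw [hu]
    field_simp
  have hfib : ∀ j, ‖x j - xs‖ ≤ R * u ^ Nat.fib (j + 1) ∧
      ‖x (j + 1) - xs‖ ≤ R * u ^ Nat.fib (j + 2) := by
    intro j
    induction j with
    | zero => simp [hRu]
    | succ j ih =>
      refine ⟨ih.2, (hrec j (hball j).1 (hball j).2).trans ?_⟩
      calc 1 / R * (‖x (j + 1) - xs‖ * ‖x j - xs‖)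
          ≤ 1 / R * ((R * u ^ Nat.fib (j + 2)) * (R * u ^ Nat.fib (j + 1))) := by
            gcongr
            exacts [ih.2, ih.1]
        _ = R * u ^ Nat.fib (j + 1 + 2) := by
            rw [Nat.fib_add_two (n := j + 1), pow_add]
            field_simp
  refine ⟨hu1, ?_, fun j => (hfib j).1, ?_⟩
  · intro j hj
    obtain ⟨i, rfl⟩ := Nat.exists_eq_add_of_le' hj
    exact hrec i (hball i).1 (hball i).2
  · -- `Nat.fib` is strictly increasing only from index 2 on, hence the shift by one.
    rw [← tendsto_add_atTop_iff_nat 1, tendsto_iff_norm_sub_tendsto_zero]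
    have hlim : Tendsto (fun j => R * u ^ Nat.fib (j + 2)) atTop (nhds 0) := by
      simpa using ((tendsto_pow_atTop_nhds_zero_of_lt_one hu0 hu1).comp
        Nat.fib_add_two_strictMono.tendsto_atTop).const_mul R
    exact squeeze_zero (fun _ => norm_nonneg _) (fun j => (hfib j).2) hlim
end

section
/- Let n ∈ ℕ, x* ∈ ℝⁿ, and c, γ > 0. Let Φ : ℝⁿ × ℝⁿ → (ℝⁿ → ℝⁿ) be a two-parameter family of maps such that ‖x − x*‖ ≤ c·‖Φ(x*,x*)(x)‖ for all x ∈ ℝⁿ and ‖Φ(ž,ẑ)(x) − Φ(x*,x*)(x)‖ ≤ γ·( max(‖ž − x*‖, ‖ẑ − x*‖)·‖x − x*‖ + (1/2)·‖ž − x*‖·‖ẑ − x*‖ ) for all x, ž, ẑ ∈ ℝⁿ (i.e. the metric regularity and stability bounds hold globally). Set R = 2/(3cγ). Then for all x̌, x̂ ∈ B̄(x*,R), every x ∈ ℝⁿ with Φ(x̌,x̂)(x) = 0 satisfies ‖x − x*‖ ≤ max(‖x̌ − x*‖, ‖x̂ − x*‖). -/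
/-!
Write `d = ‖x - x*‖` and `m = max ‖x̌ - x*‖ ‖x̂ - x*‖`. At a root of the local model,
stability bounds `‖Φ x* x* x‖` itself, so metric regularity gives `d ≤ cγ (m d + m² / 2)`.
The radius is chosen such that `m ≤ R` means `cγ m ≤ 2 / 3`, whence `d ≤ 2 / 3 * d + m / 3`,
that is, `d ≤ m`.
-/

open Metric

/-- Corollary to the Contractivity Proposition: if metric regularity and
stability hold globally (the underlying function is globally coherently
oriented), then with `R = 2/(3cγ)` every root of a local model with reference
points in `B̄(x*,R)` satisfies `‖x − x*‖ ≤ max(‖x̌ − x*‖, ‖x̂ − x*‖)`. -/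
theorem global_contractivity_radius
    (n : ℕ) (xs : EuclideanSpace ℝ (Fin n)) (c γ : ℝ)
    (hc : 0 < c) (hγ : 0 < γ)
    (Φ : EuclideanSpace ℝ (Fin n) → EuclideanSpace ℝ (Fin n) →
      (EuclideanSpace ℝ (Fin n) → EuclideanSpace ℝ (Fin n)))
    (hreg : ∀ x, ‖x - xs‖ ≤ c * ‖Φ xs xs x‖)
    (hstab : ∀ x zc zh,
      ‖Φ zc zh x - Φ xs xs x‖ ≤
        γ * (max ‖zc - xs‖ ‖zh - xs‖ * ‖x - xs‖ + (1 / 2) * ‖zc - xs‖ * ‖zh - xs‖))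
    (R : ℝ) (hR : R = 2 / (3 * c * γ)) :
    ∀ xc ∈ closedBall xs R, ∀ xh ∈ closedBall xs R, ∀ x,
      Φ xc xh x = 0 → ‖x - xs‖ ≤ max ‖xc - xs‖ ‖xh - xs‖ := by
  intro xc hxc xh hxh x hx
  rw [mem_closedBall, dist_eq_norm] at hxc hxh
  have h1 := hreg x
  have h2 := hstab x xc xh
  rw [hx, zero_sub, norm_neg] at h2
  have hm : max ‖xc - xs‖ ‖xh - xs‖ ≤ R := max_le hxc hxh
  have ha := le_max_left ‖xc - xs‖ ‖xh - xs‖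
  have hb := le_max_right ‖xc - xs‖ ‖xh - xs‖
  have ha0 := norm_nonneg (xc - xs)
  have hb0 := norm_nonneg (xh - xs)
  have hd0 := norm_nonneg (x - xs)
  generalize max ‖xc - xs‖ ‖xh - xs‖ = m at *
  generalize ‖xc - xs‖ = a at *
  generalize ‖xh - xs‖ = b at *
  generalize ‖x - xs‖ = d at *
  have hm0 : 0 ≤ m := ha0.trans ha
  have hab : a * b ≤ m * m := mul_le_mul ha hb hb0 hm0
  have hk : 0 < c * γ := mul_pos hc hγ
  have hkm : c * γ * m ≤ 2 / 3 := by
    calc c * γ * m ≤ c * γ * R := by gcongr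
      _ = 2 / 3 := by rw [hR]; field_simp
  have key : d ≤ c * γ * m * d + c * γ * m * m / 2 := by
    have h3 := mul_le_mul_of_nonneg_left h2 hc.le
    have h4 := mul_le_mul_of_nonneg_left hab hk.le
    linarith
  -- Bounding `c * γ * m` by `2 / 3` in both terms leaves `d ≤ 2 / 3 * d + m / 3`.
  have h5 := mul_le_mul_of_nonneg_right hkm hd0
  have h6 := mul_le_mul_of_nonneg_right hkm hm0
  linarith
end

section
/- Let n ∈ ℕ, let D ⊆ ℝⁿ be open with x* ∈ D, and let P : ℝⁿ → ℝⁿ be continuous with P(x*) = 0 and coherently oriented on D, meaning: there is a finite nonempty family of affine maps P_i(x) = A_i·x + b_i whose linear parts A_i all have nonzero determinants of the same sign, such that for every x ∈ D, P(x) = P_i(x) for some i. Let γ > 0 and let Φ : ℝⁿ × ℝⁿ → (ℝⁿ → ℝⁿ) be a family of continuous maps with Φ(x*,x*) = P and ‖Φ(x̌,x̂)(x) − P(x)‖ ≤ γ·( max(‖x̌ − x*‖, ‖x̂ − x*‖)·‖x − x*‖ + (1/2)·‖x̌ − x*‖·‖x̂ − x*‖ ) for all x, x̌, x̂ ∈ D.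 Then there exist radii r, R > 0 such that for every α ∈ (0,1) and all x̌, x̂ in the closed ball B̄(x*,(1−α)R), the open ball B(0, α·r) is contained in the image Φ(x̌,x̂)(D). -/
/-!
The image statement is a mapping-degree argument, carried out here without degree theory, by
integrating Jacobian determinants of Lipschitz maps.

*The determinant is a null Lagrangian.* If `f` and `g` are Lipschitz self-maps of a
finite-dimensional space `E` that agree off a compact set `K`, then `∫_K det Df = ∫_K det Dg`
(`setIntegral_det_fderiv_congr`). For `s` larger than both Lipschitz constants, `s • id + f` and
`s • id + g` are bijections of `E` with positive Jacobian. They agree off `K`, so they map `K` onto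
the same set, and the change of variables formula identifies the integrals of
`det (s • id + Df)` and `det (s • id + Dg)` over `K` with the measure of this set. Both are
polynomials in `s`, so they also agree at `s = 0`. Lagrange interpolation, which writes `det M` as a
fixed linear combination of values `det (s • id + M)` with `s` large, makes this step a finite sum.

*Zeros persist.* Let `P` be Lipschitz with a zero in the interior of `K` and Jacobian of one
strict sign at the points of differentiability in `K`, and let the Lipschitz map `f` agree with `P`
off `K`. If `f` had no zero in `K`, then `f` would miss a cube around `0` on `K`. Compose with a map
`ρ` whose Jacobian is positive in the open cube and zero outside it: then `det D(ρ ∘ f) = 0` almost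
everywhere on `K`, while `det D(ρ ∘ P)` has one weak sign and is nonzero almost everywhere near the
zero of `P`, contradicting equality of the integrals (`exists_zero_of_eq_off_compact`). Smoothing
and a cutoff extend this to continuous maps `q` that are closer to `P` than `‖P‖` is near the
boundary of the ball (`exists_zero_of_norm_sub_lt`).

*The piecewise affine map.* A continuous selection of finitely many affine maps is Lipschitz on
convex sets, and its derivative, wherever it exists, is the linear part of one of the pieces. The
pieces are injective, so zeros are isolated and `‖P‖` is bounded below on a shell around `x*`.
The stability estimate then makes `q = Φ(x̌,x̂) - y` close enough to `P`.
-/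

open Metric
open MeasureTheory Set Filter Topology
open scoped NNReal

/-! ### Jacobian integrals of Lipschitz maps -/

section General
variable {E : Type*} [NormedAddCommGroup E] [NormedSpace ℝ E] [FiniteDimensional ℝ E]

/-- The determinant does not vanish along the segment from `s • id` to `s • id + M`, so its sign
is that of `det (s • id) = s ^ dim E`. -/
lemma det_smul_id_add_pos {M : E →L[ℝ] E} {s : ℝ} (h : ‖M‖ < s) :
    0 < (s • ContinuousLinearMap.id ℝ E + M).det := by
  have hs : 0 < s := (norm_nonneg M).trans_lt h
  set g : ℝ → ℝ := fun t => (s • ContinuousLinearMap.id ℝ E + t • M).det with hg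
  have hgc : Continuous g :=
    ContinuousLinearMap.continuous_det.comp (by fun_prop)
  have h0 : 0 < g 0 := by
    simp only [hg, zero_smul, add_zero, ContinuousLinearMap.det]
    rw [ContinuousLinearMap.toLinearMap_smul, LinearMap.det_smul]
    simp [pow_pos hs]
  have hne : ∀ t ∈ Icc (0 : ℝ) 1, g t ≠ 0 := by
    intro t ht h0
    obtain ⟨v, hv, hv0⟩ := LinearMap.bot_lt_ker_of_det_eq_zero h0 |>.ne' |> (Submodule.ne_bot_iff _).1
    have hv' : s • v + t • M v = 0 := by simpa using hv
    have h1 : s * ‖v‖ = t * ‖M v‖ := by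
      have := congrArg norm (eq_neg_of_add_eq_zero_left hv')
      simpa [norm_smul, abs_of_pos hs, abs_of_nonneg ht.1] using this
    have h2 := M.le_opNorm v
    have h3 : 0 < ‖v‖ := norm_pos_iff.2 hv0
    have h4 : t * ‖M v‖ ≤ 1 * ‖M v‖ := mul_le_mul_of_nonneg_right ht.2 (norm_nonneg _)
    have h5 : ‖M‖ * ‖v‖ < s * ‖v‖ := mul_lt_mul_of_pos_right h h3
    linarith
  have h1 : 0 < g 1 := by
    by_contra! hle
    obtain ⟨t, ht, h0⟩ := intermediate_value_Icc' zero_le_one hgc.continuousOn ⟨hle, h0.le⟩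
    exact hne t ht h0
  simpa [hg] using h1

/-- Surjectivity is the contraction principle for `x ↦ s⁻¹ • (y - f x)`. -/
lemma bijective_smul_add {f : E → E} {C : ℝ≥0} (hf : LipschitzWith C f) {s : ℝ} (hs : C < s) :
    Function.Bijective (fun x => s • x + f x) := by
  have hs0 : 0 < s := C.2.trans_lt hs
  have hdist : ∀ x y, ‖f x - f y‖ ≤ C * ‖x - y‖ := fun x y => by
    simpa [dist_eq_norm] using hf.dist_le_mul x y
  constructor
  · intro x y hxy
    have h1 : s • (x - y) = -(f x - f y) := by
      rw [smul_sub, sub_eq_iff_eq_add]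
      have : s • x + f x = s • y + f y := hxy
      rw [eq_sub_of_add_eq this]; abel
    have h2 := congrArg norm h1
    rw [norm_smul, norm_neg, Real.norm_of_nonneg hs0.le] at h2
    by_contra hne
    have h3 : 0 < ‖x - y‖ := norm_pos_iff.2 (sub_ne_zero.2 hne)
    have := mul_lt_mul_of_pos_right hs h3
    linarith [hdist x y]
  · intro y
    have hc : ContractingWith (C / s.toNNReal) (fun x => s⁻¹ • (y - f x)) := by
      constructor
      · rw [div_lt_one (by simpa using hs0)]
        exact (Real.lt_toNNReal_iff_coe_lt).2 hs
      · refine LipschitzWith.of_dist_le_mul fun a b => ?_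
        rw [dist_eq_norm, dist_eq_norm, ← smul_sub, norm_smul, sub_sub_sub_cancel_left,
          norm_inv, Real.norm_of_nonneg hs0.le, NNReal.coe_div, Real.coe_toNNReal _ hs0.le,
          norm_sub_rev, div_eq_inv_mul, mul_assoc]
        exact mul_le_mul_of_nonneg_left (hdist a b) (inv_nonneg.2 hs0.le)
    have : CompleteSpace E := FiniteDimensional.complete ℝ E
    refine ⟨hc.fixedPoint, ?_⟩
    have := hc.fixedPoint_isFixedPt
    have h2 : s • hc.fixedPoint = y - f hc.fixedPoint := by
      conv_lhs => rw [← this.eq]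
      rw [smul_inv_smul₀ hs0.ne']
    simp [h2]

/-- Lagrange interpolation of the polynomial `s ↦ det (s • id + M)` at `dim E + 1` nodes beyond `c`,
evaluated at `s = 0`. Nodes and weights do not depend on `M`. -/
lemma exists_det_eq_sum (c : ℝ) : ∃ (N : ℕ) (w v : ℕ → ℝ), (∀ i, c < v i) ∧
    ∀ M : E →L[ℝ] E, M.det = ∑ i ∈ Finset.range N,
      w i * (v i • ContinuousLinearMap.id ℝ E + M).det := by
  classical
  set N := Module.finrank ℝ E + 1
  set v : ℕ → ℝ := fun i => c + 1 + i with hv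
  have hinj : Set.InjOn v (Finset.range N : Set ℕ) := fun i _ j _ h => by
    simpa [hv] using h
  refine ⟨N, fun i => (Lagrange.basis (Finset.range N) v i).eval 0, v, fun i => ?_, fun M => ?_⟩
  · have : (0 : ℝ) ≤ i := Nat.cast_nonneg i
    simp only [hv]; linarith
  have heval : ∀ t : ℝ, (-M.toLinearMap).charpoly.eval t
      = (t • ContinuousLinearMap.id ℝ E + M).det := fun t => by
    rw [LinearMap.eval_charpoly, sub_neg_eq_add]
    rfl
  have hdeg : (-M.toLinearMap).charpoly.degree < (Finset.range N).card := by
    rw [Polynomial.degree_eq_natDegree (LinearMap.charpoly_monic _).ne_zero,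
      LinearMap.charpoly_natDegree, Finset.card_range]
    exact_mod_cast Nat.lt_succ_self _
  have h := congrArg (Polynomial.eval 0) (Lagrange.eq_interpolate hinj hdeg)
  rw [heval, zero_smul, zero_add, Lagrange.interpolate_apply, Polynomial.eval_finsetSum] at h
  rw [h]
  refine Finset.sum_congr rfl fun i _ => ?_
  rw [Polynomial.eval_mul, Polynomial.eval_C, heval, mul_comm]

variable [MeasurableSpace E] [BorelSpace E]

lemma integrableOn_det_smul_id_add_fderiv {μ : Measure E} [IsFiniteMeasureOnCompacts μ]
    {f : E → E} {C : ℝ≥0} (hf : LipschitzWith C f)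
    {K : Set E} (hK : IsCompact K) (s : ℝ) :
    IntegrableOn (fun x => (s • ContinuousLinearMap.id ℝ E + fderiv ℝ f x).det) K μ := by
  have : CompleteSpace E := FiniteDimensional.complete ℝ E
  have hcont : Continuous fun M : E →L[ℝ] E => (s • ContinuousLinearMap.id ℝ E + M).det :=
    ContinuousLinearMap.continuous_det.comp (by fun_prop)
  have : ProperSpace (E →L[ℝ] E) := FiniteDimensional.proper ℝ _
  obtain ⟨B, hB⟩ := (isCompact_closedBall (0 : E →L[ℝ] E) C).exists_bound_of_continuousOn
    hcont.continuousOn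
  refine Measure.integrableOn_of_bounded (M := B) hK.measure_lt_top.ne
    (hcont.measurable.comp (measurable_fderiv ℝ f)).aestronglyMeasurable
    (ae_of_all _ fun x => hB _ ?_)
  simpa using norm_fderiv_le_of_lipschitz ℝ hf

open Module in
/-- Change of variables for `s • id + f`. The map is differentiable only almost everywhere
(Rademacher); the remaining null set has null image because Lipschitz maps do not increase
Hausdorff measure by more than a constant factor. This is why the Haar measure used throughout is
the Hausdorff measure of top dimension. -/
lemma setIntegral_det_smul_id_add_fderiv {f : E → E} {C : ℝ≥0} (hf : LipschitzWith C f)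
    {K : Set E} (hK : IsCompact K) {s : ℝ} (hs : C < s) :
    ∫ x in K, (s • ContinuousLinearMap.id ℝ E + fderiv ℝ f x).det ∂(μH[finrank ℝ E]) =
      (μH[finrank ℝ E] ((fun x => s • x + f x) '' K)).toReal := by
  set μ : Measure E := μH[finrank ℝ E]
  have : CompleteSpace E := FiniteDimensional.complete ℝ E
  have hpos : ∀ x, 0 < (s • ContinuousLinearMap.id ℝ E + fderiv ℝ f x).det := fun x =>
    det_smul_id_add_pos ((norm_fderiv_le_of_lipschitz ℝ hf).trans_lt hs)
  rw [integral_eq_lintegral_of_nonneg_ae (ae_of_all _ fun x => (hpos x).le)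
    (integrableOn_det_smul_id_add_fderiv hf hK s).aestronglyMeasurable]
  congr 1
  set T : Set E := {x | DifferentiableAt ℝ f x}
  have hT : MeasurableSet T := measurableSet_of_differentiableAt ℝ f
  have hTnull : μ Tᶜ = 0 := hf.ae_differentiableAt (μ := μ)
  set Q : E → E := fun x => s • x + f x
  have hQ : LipschitzWith (‖s‖₊ + C) Q := (lipschitzWith_smul s).add hf
  have himg : μ (Q '' K) = μ (Q '' (K ∩ T)) := by
    refine le_antisymm ?_ (measure_mono (image_mono inter_subset_left))
    have h1 : Q '' K ⊆ Q '' (K ∩ T) ∪ Q '' Tᶜ := by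
      rw [← image_union]
      refine image_mono fun x hx => ?_
      by_cases h : x ∈ T
      · exact Or.inl ⟨hx, h⟩
      · exact Or.inr h
    have h2 : μ (Q '' Tᶜ) = 0 := by
      have := hQ.hausdorffMeasure_image_le (d := finrank ℝ E) (Nat.cast_nonneg _) Tᶜ
      rw [show μH[finrank ℝ E] Tᶜ = 0 from hTnull, mul_zero] at this
      exact le_antisymm this bot_le
    calc μ (Q '' K) ≤ μ (Q '' (K ∩ T)) + μ (Q '' Tᶜ) :=
          (measure_mono h1).trans (measure_union_le _ _)
      _ = _ := by rw [h2, add_zero]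
  have hchange := lintegral_abs_det_fderiv_eq_addHaar_image μ (hK.measurableSet.inter hT) (f := Q)
    (f' := fun x => s • ContinuousLinearMap.id ℝ E + fderiv ℝ f x)
    (fun x hx => (((hasFDerivAt_id x).const_smul s).add hx.2.hasFDerivAt).hasFDerivWithinAt)
    (bijective_smul_add hf hs).1.injOn
  have hae : (K ∩ T : Set E) =ᵐ[μ] K := by
    filter_upwards [hf.ae_differentiableAt (μ := μ)] with x hx
    exact propext ⟨fun h => h.1, fun h => ⟨h, hx⟩⟩
  rw [himg, ← hchange, Measure.restrict_congr_set hae]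
  exact lintegral_congr fun x => by rw [abs_of_pos (hpos x)]

open Module in
/-- The determinant is a null Lagrangian: the integral of the Jacobian over a compact set does not
change when a Lipschitz map is modified inside that set. -/
lemma setIntegral_det_fderiv_congr {f g : E → E} {C C' : ℝ≥0} (hf : LipschitzWith C f)
    (hg : LipschitzWith C' g) {K : Set E} (hK : IsCompact K) (hfg : ∀ x ∉ K, f x = g x) :
    ∫ x in K, (fderiv ℝ f x).det ∂(μH[finrank ℝ E]) =
      ∫ x in K, (fderiv ℝ g x).det ∂(μH[finrank ℝ E]) := by
  obtain ⟨N, w, v, hv, hdet⟩ := exists_det_eq_sum (E := E) (max C C' : ℝ)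
  have key : ∀ s : ℝ, max (C : ℝ) C' < s →
      (fun x => s • x + f x) '' K = (fun x => s • x + g x) '' K := by
    intro s hs
    have h1 := bijective_smul_add hf ((le_max_left _ _).trans_lt hs)
    have h2 := bijective_smul_add hg ((le_max_right _ _).trans_lt hs)
    rw [← compl_inj_iff, ← image_compl_eq h1, ← image_compl_eq h2]
    exact image_congr fun x hx => by simp [hfg x hx]
  have hexp : ∀ h : E → E, ∫ x in K, (fderiv ℝ h x).det ∂(μH[finrank ℝ E]) =
      ∫ x in K, ∑ i ∈ Finset.range N, w i *
        (v i • ContinuousLinearMap.id ℝ E + fderiv ℝ h x).det ∂(μH[finrank ℝ E]) :=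
    fun h => integral_congr_ae (ae_of_all _ fun x => hdet _)
  rw [hexp f, hexp g, integral_finsetSum _ fun i _ =>
      (integrableOn_det_smul_id_add_fderiv hf hK (v i)).const_mul (w i),
    integral_finsetSum _ fun i _ =>
      (integrableOn_det_smul_id_add_fderiv hg hK (v i)).const_mul (w i)]
  refine Finset.sum_congr rfl fun i _ => ?_
  rw [integral_const_mul, integral_const_mul,
    setIntegral_det_smul_id_add_fderiv hf hK ((le_max_left _ _).trans_lt (hv i)),
    setIntegral_det_smul_id_add_fderiv hg hK ((le_max_right _ _).trans_lt (hv i)),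
    key _ (hv i)]

end General

/-! ### Continuous selections of affine maps -/

section PL
variable {E : Type*} [NormedAddCommGroup E] [NormedSpace ℝ E]

/-- Pigeonhole along a ray: since there are finitely many affine pieces, a single one is active at
points arbitrarily close to `x` on the ray, and by continuity it is active at `x` too. -/
lemma exists_frequently_eq_smul {k : ℕ} {A : Fin k → E →L[ℝ] E} {b : Fin k → E} {P : E → E}
    (hP : Continuous P) {x v : E}
    (hsel : ∀ᶠ t : ℝ in 𝓝[>] 0, ∃ i, P (x + t • v) = A i (x + t • v) + b i) :
    ∃ i, ∃ᶠ t : ℝ in 𝓝[>] 0, P (x + t • v) - P x = t • A i v := by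
  obtain ⟨i, hi⟩ : ∃ i, ∃ᶠ t : ℝ in 𝓝[>] 0, P (x + t • v) = A i (x + t • v) + b i := by
    by_contra! h
    obtain ⟨t, ⟨i, hi⟩, ht⟩ := (hsel.and (eventually_all.2 h)).exists
    exact ht i hi
  refine ⟨i, ?_⟩
  have hx : P x = A i x + b i := by
    have hclosed : IsClosed {t : ℝ | P (x + t • v) = A i (x + t • v) + b i} :=
      isClosed_eq (by fun_prop) (by fun_prop)
    have := hclosed.mem_of_frequently_of_tendsto hi
      (tendsto_id.mono_left nhdsWithin_le_nhds : Tendsto id (𝓝[>] (0 : ℝ)) (𝓝 0))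
    simpa using this
  refine hi.mono fun t ht => ?_
  rw [ht, hx, map_add, map_smul]
  abel

/-- In each direction `P'` agrees with some `A i`, so the space is the union of the finitely many
subspaces `ker (P' - A i)`, and one of them must be everything. -/
lemma exists_eq_of_hasFDerivAt {k : ℕ} {A : Fin k → E →L[ℝ] E} {b : Fin k → E} {P : E → E}
    (hP : Continuous P) {x : E} (hsel : ∀ᶠ y in 𝓝 x, ∃ i, P y = A i y + b i)
    {P' : E →L[ℝ] E} (hP' : HasFDerivAt P P' x) : ∃ i, P' = A i := by
  have hcov : ⋃ i, ((LinearMap.ker (P' - A i).toLinearMap : Submodule ℝ E) : Set E) = univ := by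
    refine eq_univ_of_forall fun v => mem_iUnion.2 ?_
    have hline : Tendsto (fun t : ℝ => x + t • v) (𝓝[>] 0) (𝓝 x) := by
      have : Continuous fun t : ℝ => x + t • v := by fun_prop
      simpa using (this.tendsto 0).mono_left nhdsWithin_le_nhds
    obtain ⟨i, hi⟩ := exists_frequently_eq_smul hP (hline.eventually hsel)
    refine ⟨i, ?_⟩
    have hlim : Tendsto (fun t : ℝ => t⁻¹ • (P (x + t • v) - P x)) (𝓝[>] 0) (𝓝 (P' v)) := by
      have := (hP'.hasLineDerivAt v).tendsto_slope_zero_right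
      simpa using this
    have hfreq : ∃ᶠ t : ℝ in 𝓝[>] 0, t⁻¹ • (P (x + t • v) - P x) ∈ ({A i v} : Set E) := by
      refine (hi.and_eventually self_mem_nhdsWithin).mono fun t ht => ?_
      rw [ht.1, inv_smul_smul₀ (ne_of_gt ht.2)]
      rfl
    have := isClosed_singleton.mem_of_frequently_of_tendsto hfreq hlim
    simpa [sub_eq_zero] using this
  obtain ⟨i, hi⟩ := Subspace.exists_eq_top_of_iUnion_eq_univ hcov
  refine ⟨i, ?_⟩
  rw [← sub_eq_zero]
  ext v
  have : v ∈ LinearMap.ker (P' - A i).toLinearMap := hi ▸ Submodule.mem_top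
  simpa using this

/-- On each segment in `S`, the right slopes of `P` are frequently bounded by the length of the
segment times the sum of the operator norms of the pieces, so the mean value inequality applies. -/
lemma exists_lipschitzOnWith_of_selection {k : ℕ} {A : Fin k → E →L[ℝ] E} {b : Fin k → E}
    {P : E → E} (hP : Continuous P) {S : Set E} (hS : Convex ℝ S)
    (hsel : ∀ x ∈ S, ∃ i, P x = A i x + b i) : ∃ L : ℝ≥0, LipschitzOnWith L P S := by
  refine ⟨∑ i, ‖A i‖₊, LipschitzOnWith.of_dist_le_mul fun y hy x hx => ?_⟩
  set L : ℝ≥0 := ∑ i, ‖A i‖₊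
  have hL : ∀ i, ‖A i‖ ≤ L := fun i => by
    exact_mod_cast Finset.single_le_sum (f := fun i => ‖A i‖₊) (fun _ _ => zero_le)
      (Finset.mem_univ i)
  set v := y - x with hv
  set φ : ℝ → E := fun t => P (x + t • v) - P x with hφ
  have hseg : ∀ t ∈ Icc (0 : ℝ) 1, x + t • v ∈ S := fun t ht =>
    hS.add_smul_sub_mem hx hy ht
  have hbound : ∀ ε > 0, ‖P y - P x‖ ≤ L * ‖v‖ + ε := by
    intro ε hε
    have := image_norm_le_of_liminf_right_slope_norm_lt_deriv_boundary (a := 0) (b := 1) (f := φ)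
      (f' := fun _ => L * ‖v‖) (B := fun t => (L * ‖v‖ + ε) * t)
      (B' := fun _ => L * ‖v‖ + ε) (by fun_prop) ?_ (by simp [hφ]) (by fun_prop)
      (fun t _ => by simpa using ((hasDerivAt_id t).const_mul (L * ‖v‖ + ε)).hasDerivWithinAt)
      (fun t _ _ => by linarith) (right_mem_Icc.2 zero_le_one)
    · simpa [hφ, hv] using this
    · intro t ht r hr
      have hmap : Tendsto (fun s : ℝ => t + s) (𝓝[>] 0) (𝓝[>] t) := by
        refine tendsto_nhdsWithin_iff.2 ⟨?_, ?_⟩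
        · have : Continuous fun s : ℝ => t + s := by fun_prop
          simpa using (this.tendsto 0).mono_left nhdsWithin_le_nhds
        · filter_upwards [self_mem_nhdsWithin] with s hs
          simpa using hs
      have hev : ∀ᶠ s : ℝ in 𝓝[>] 0,
          ∃ i, P ((x + t • v) + s • v) = A i ((x + t • v) + s • v) + b i := by
        filter_upwards [Ioo_mem_nhdsGT (sub_pos.2 ht.2)] with s hs
        rw [add_assoc, ← add_smul]
        exact hsel _ (hseg _ ⟨by linarith [ht.1, hs.1], by linarith [hs.2]⟩)
      obtain ⟨i, hi⟩ := exists_frequently_eq_smul hP hev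
      refine hmap.frequently ((hi.and_eventually self_mem_nhdsWithin).mono fun s ⟨hs, hs0⟩ => ?_)
      have hs0 : 0 < s := hs0
      refine lt_of_le_of_lt ?_ hr
      rw [slope_def_field, add_sub_cancel_left, div_le_iff₀ hs0]
      have h1 : φ (t + s) - φ t = s • A i v := by
        rw [← hs]; simp only [hφ, add_smul, add_assoc]; abel
      calc (norm ∘ φ) (t + s) - (norm ∘ φ) t ≤ ‖φ (t + s) - φ t‖ := norm_sub_norm_le _ _
        _ = s * ‖A i v‖ := by rw [h1, norm_smul, Real.norm_of_nonneg hs0.le]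
        _ ≤ s * (L * ‖v‖) := by
          gcongr
          exact (A i).le_of_opNorm_le (hL i) v
        _ = _ := mul_comm _ _
  rw [dist_eq_norm, dist_eq_norm]
  exact le_of_forall_pos_le_add hbound

lemma lipschitzWith_smul_of_eq_zero {χ : E → ℝ} {u : E → E} {a L B : ℝ≥0} {S : Set E}
    (hχ : LipschitzWith a χ) (hu : LipschitzWith L u) (hχ1 : ∀ x, ‖χ x‖ ≤ 1)
    (hχ0 : ∀ x ∉ S, χ x = 0) (hB : ∀ x ∈ S, ‖u x‖ ≤ B) :
    LipschitzWith (L + a * B) (fun x => χ x • u x) := by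
  have key : ∀ x, ∀ y ∈ S, ‖χ x • u x - χ y • u y‖ ≤ (L + a * B) * ‖x - y‖ := by
    intro x y hy
    have h1 : ‖u x - u y‖ ≤ L * ‖x - y‖ := by simpa [dist_eq_norm] using hu.dist_le_mul x y
    have h2 : ‖χ x - χ y‖ ≤ a * ‖x - y‖ := by simpa [dist_eq_norm] using hχ.dist_le_mul x y
    calc ‖χ x • u x - χ y • u y‖ = ‖χ x • (u x - u y) + (χ x - χ y) • u y‖ := by
          congr 1; rw [smul_sub, sub_smul]; abel
      _ ≤ ‖χ x‖ * ‖u x - u y‖ + ‖χ x - χ y‖ * ‖u y‖ := by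
          simpa only [norm_smul] using norm_add_le (χ x • (u x - u y)) ((χ x - χ y) • u y)
      _ ≤ 1 * (L * ‖x - y‖) + (a * ‖x - y‖) * B := by
          gcongr
          · exact hχ1 x
          · exact hB y hy
      _ = _ := by ring
  refine LipschitzWith.of_dist_le_mul fun x y => ?_
  rw [dist_eq_norm, dist_eq_norm, NNReal.coe_add, NNReal.coe_mul]
  by_cases hy : y ∈ S
  · exact key x y hy
  · by_cases hx : x ∈ S
    · rw [norm_sub_rev, norm_sub_rev x]; exact key y x hx
    · rw [hχ0 x hx, hχ0 y hy]; simp only [zero_smul, sub_self, norm_zero]; positivity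
end PL

/-! ### A map collapsing the complement of a cube -/

section Rho
variable {n : ℕ}
local notation "𝔼" => EuclideanSpace ℝ (Fin n)

/-- A primitive of the tent function of height and half-width `ε`. -/
lemma exists_primitive_tent {ε : ℝ} (hε : 0 < ε) : ∃ h : ℝ → ℝ, LipschitzWith ε.toNNReal h ∧
    ∀ t, HasDerivAt h (max 0 (ε - |t|)) t := by
  have hd : ∀ t, HasDerivAt (fun t => ∫ s in (0 : ℝ)..t, max 0 (ε - |s|)) (max 0 (ε - |t|)) t :=
    fun t => (Continuous.integral_hasStrictDerivAt (by fun_prop) 0 t).hasDerivAt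
  refine ⟨_, ?_, hd⟩
  refine lipschitzWith_of_nnnorm_deriv_le (fun t => (hd t).differentiableAt) fun t => ?_
  rw [(hd t).deriv, ← NNReal.coe_le_coe, coe_nnnorm, Real.coe_toNNReal _ hε.le,
    Real.norm_of_nonneg (le_max_left _ _)]
  exact max_le hε.le (by linarith [abs_nonneg t])

/-- A Lipschitz map whose Jacobian is positive on the open cube of half-side `ε` about `0` and
vanishes elsewhere; it acts on each coordinate by a primitive of the tent function. -/
lemma exists_cube_collapse {ε : ℝ} (hε : 0 < ε) : ∃ (ρ : 𝔼 → 𝔼) (ρ' : 𝔼 → 𝔼 →L[ℝ] 𝔼) (C : ℝ≥0),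
    LipschitzWith C ρ ∧ (∀ z, HasFDerivAt ρ (ρ' z) z) ∧
    ∀ z, (ρ' z).det = ∏ i, max 0 (ε - |z i|) := by
  obtain ⟨h, hL, hd⟩ := exists_primitive_tent hε
  refine ⟨fun z => WithLp.toLp 2 fun i => h (z i),
    fun z => Matrix.toEuclideanCLM (𝕜 := ℝ) (Matrix.diagonal fun i => max 0 (ε - |z i|)),
    ε.toNNReal, ?_, fun z => ?_, fun z => ?_⟩
  · refine LipschitzWith.of_dist_le_mul fun z w => ?_
    rw [EuclideanSpace.dist_eq, EuclideanSpace.dist_eq]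
    refine Real.sqrt_le_iff.2 ⟨by positivity, ?_⟩
    rw [mul_pow, Real.sq_sqrt (by positivity), Finset.mul_sum]
    refine Finset.sum_le_sum fun i _ => ?_
    rw [← mul_pow]
    exact pow_le_pow_left₀ dist_nonneg (hL.dist_le_mul _ _) 2
  · rw [← hasFDerivWithinAt_univ, hasFDerivWithinAt_euclidean]
    intro i
    rw [hasFDerivWithinAt_univ]
    have h1 : HasFDerivAt (fun z : 𝔼 => z i) (EuclideanSpace.proj i : 𝔼 →L[ℝ] ℝ) z :=
      (EuclideanSpace.proj i : 𝔼 →L[ℝ] ℝ).hasFDerivAt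
    refine ((hd (z i)).comp_hasFDerivAt z h1).congr_fderiv ?_
    ext v
    simp [Matrix.mulVec_diagonal]
  · rw [ContinuousLinearMap.det, Matrix.coe_toEuclideanCLM_eq_toEuclideanLin]
    rw [LinearMap.det_toLpLin, Matrix.det_diagonal]
end Rho

/-! ### Persistence of zeros -/

section Main
variable {n : ℕ}
local notation "𝔼" => EuclideanSpace ℝ (Fin n)

/-- A sign-coherent Lipschitz map with an interior zero cannot lose its zeros in `K` by being
modified inside `K`. The scalar `σ` records the sign of the Jacobian of `P`. -/
lemma exists_zero_of_eq_off_compact {P f : 𝔼 → 𝔼} {C C' : ℝ≥0} (hP : LipschitzWith C P)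
    (hf : LipschitzWith C' f) {K : Set 𝔼} (hK : IsCompact K) (hPf : ∀ x ∉ K, f x = P x)
    {σ : ℝ} (hσ : ∀ x ∈ K, DifferentiableAt ℝ P x → 0 < σ * (fderiv ℝ P x).det)
    {x₀ : 𝔼} (hx₀ : x₀ ∈ interior K) (hPx₀ : P x₀ = 0) : ∃ x ∈ K, f x = 0 := by
  by_contra! hne
  set μ : Measure 𝔼 := μH[Module.finrank ℝ 𝔼] with hμ
  obtain ⟨ε, hε, hεf⟩ := hK.exists_forall_le' (f := fun x => ‖(f x).ofLp‖) (a := 0)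
    (by have := hf.continuous; fun_prop) (fun x hx => norm_pos_iff.2 (by simpa using hne x hx))
  obtain ⟨ρ, ρ', Cρ, hρ, hρd, hdet⟩ := exists_cube_collapse (n := n) hε
  have hdetcomp : ∀ (g : 𝔼 → 𝔼) (x : 𝔼), DifferentiableAt ℝ g x →
      (fderiv ℝ (ρ ∘ g) x).det = (∏ i, max 0 (ε - |g x i|)) * (fderiv ℝ g x).det := by
    intro g x hg
    rw [((hρd (g x)).comp x hg.hasFDerivAt).fderiv, ← hdet]
    simp [ContinuousLinearMap.det]
  have hprod : ∀ z : 𝔼, 0 ≤ ∏ i, max 0 (ε - |z i|) := fun z =>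
    Finset.prod_nonneg fun i _ => le_max_left _ _
  have hfzero : ∫ x in K, (fderiv ℝ (ρ ∘ f) x).det ∂μ = 0 := by
    refine integral_eq_zero_of_ae ((ae_restrict_iff' hK.measurableSet).2 ?_)
    filter_upwards [hf.ae_differentiableAt (μ := μ)] with x hx hxK
    obtain ⟨i, hi⟩ : ∃ i, ε ≤ |f x i| := by
      by_contra! h
      exact (hεf x hxK).not_gt ((pi_norm_lt_iff hε).2 h)
    have hzero : max 0 (ε - |f x i|) = 0 := max_eq_left (by linarith)
    rw [hdetcomp f x hx, Finset.prod_eq_zero (Finset.mem_univ i) hzero, zero_mul]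
    rfl
  have hPzero : ∫ x in K, σ * (fderiv ℝ (ρ ∘ P) x).det ∂μ = 0 := by
    rw [integral_const_mul, ← setIntegral_det_fderiv_congr (hρ.comp hf) (hρ.comp hP) hK
      (fun x hx => congrArg ρ (hPf x hx)), hfzero, mul_zero]
  have hint : IntegrableOn (fun x => σ * (fderiv ℝ (ρ ∘ P) x).det) K μ := by
    have := integrableOn_det_smul_id_add_fderiv (μ := μ) (hρ.comp hP) hK 0
    simp only [zero_smul, zero_add] at this
    exact this.const_mul σ
  have hformula : ∀ᵐ x ∂μ, x ∈ K → 0 < σ * (fderiv ℝ P x).det ∧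
      σ * (fderiv ℝ (ρ ∘ P) x).det =
        (∏ i, max 0 (ε - |P x i|)) * (σ * (fderiv ℝ P x).det) := by
    filter_upwards [hP.ae_differentiableAt (μ := μ)] with x hx hxK
    exact ⟨hσ x hxK hx, by rw [hdetcomp P x hx]; ring⟩
  have hnonneg : 0 ≤ᵐ[μ.restrict K] fun x => σ * (fderiv ℝ (ρ ∘ P) x).det := by
    refine (ae_restrict_iff' hK.measurableSet).2 ?_
    filter_upwards [hformula] with x hx hxK
    obtain ⟨h1, h2⟩ := hx hxK
    rw [h2]
    exact mul_nonneg (hprod _) h1.le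
  have hae := (ae_restrict_iff' hK.measurableSet).1
    ((setIntegral_eq_zero_iff_of_nonneg_ae hnonneg hint).1 hPzero)
  set U : Set 𝔼 := interior K ∩ {x | ‖(P x).ofLp‖ < ε}
  have hU : IsOpen U := isOpen_interior.inter
    (isOpen_lt (by have := hP.continuous; fun_prop) continuous_const)
  have hUpos : 0 < μ U := hU.measure_pos μ ⟨x₀, hx₀, by simpa [hPx₀] using hε⟩
  refine hUpos.ne' (measure_mono_null ?_ (ae_iff.1 (hformula.and hae)))
  rintro x ⟨hxK, hxε⟩ ⟨h1, h2⟩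
  obtain ⟨h3, h4⟩ := h1 (interior_subset hxK)
  have h5 := h2 (interior_subset hxK)
  have h6 : 0 < ∏ i, max 0 (ε - |P x i|) := Finset.prod_pos fun i _ =>
    lt_max_of_lt_right (sub_pos.2 ((norm_le_pi_norm (P x).ofLp i).trans_lt hxε))
  exact (mul_pos h6 h3).ne' (h4 ▸ h5)

/-- Rouché-type persistence of a zero under continuous perturbations: the lower bound `m` for
`‖P‖` is needed only on the outer half of the ball, where the cutoff between `q` and `P` takes
place. -/
lemma exists_zero_of_norm_sub_lt {P q : 𝔼 → 𝔼} {C : ℝ≥0} (hP : LipschitzWith C P)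
    (hq : Continuous q) {x₀ : 𝔼} {δ : ℝ} (hδ : 0 < δ)
    {σ : ℝ} (hσ : ∀ x ∈ closedBall x₀ δ, DifferentiableAt ℝ P x → 0 < σ * (fderiv ℝ P x).det)
    (hPx₀ : P x₀ = 0) {m : ℝ}
    (hm : ∀ x ∈ closedBall x₀ δ, δ / 2 ≤ dist x x₀ → m ≤ ‖P x‖)
    {m' : ℝ} (hm' : m' < m) (hqP : ∀ x ∈ closedBall x₀ δ, ‖q x - P x‖ ≤ m') :
    ∃ x ∈ closedBall x₀ δ, q x = 0 := by
  by_contra! hne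
  set K := closedBall x₀ δ
  have hK : IsCompact K := isCompact_closedBall x₀ δ
  obtain ⟨c, hc, hcq⟩ := hK.exists_forall_le' (f := fun x => ‖q x‖) (a := 0)
    (by fun_prop) (fun x hx => norm_pos_iff.2 (hne x hx))
  obtain ⟨q₁, hq₁, hqq₁, -⟩ := hq.exists_contDiff_approx 1 (ε := fun _ => min c (m - m'))
    continuous_const (fun _ => lt_min hc (sub_pos.2 hm'))
  obtain ⟨L, hL⟩ := (hq₁.locallyLipschitz.locallyLipschitzOn
    (s := K)).exists_lipschitzOnWith_of_compact hK
  obtain ⟨u, hu, hequ⟩ := (hL.sub (hP.lipschitzOnWith (s := K))).extend_finite_dimension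
  obtain ⟨B, hB⟩ := hK.exists_bound_of_continuousOn hu.continuous.continuousOn
  -- `χ` is `1` on the ball of radius `δ / 2` and `0` off the ball of radius `δ`.
  set χ : 𝔼 → ℝ := fun x => max 0 (min 1 (2 - 2 / δ * dist x x₀)) with hχdef
  have hχ0 : ∀ x, 0 ≤ χ x := fun x => le_max_left _ _
  have hχ1 : ∀ x, χ x ≤ 1 := fun x => max_le zero_le_one (min_le_left _ _)
  have hχL : ∃ a, LipschitzWith a χ := by
    refine ⟨_, ((LipschitzWith.of_dist_le_mul (K := (2 / δ).toNNReal) fun x y => ?_ :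
      LipschitzWith _ fun x => 2 - 2 / δ * dist x x₀).const_min 1).const_max 0⟩
    rw [Real.dist_eq, Real.coe_toNNReal _ (by positivity), sub_sub_sub_cancel_left, ← mul_sub,
      abs_mul, abs_of_pos (by positivity : 0 < 2 / δ), abs_sub_comm]
    gcongr
    exact abs_dist_sub_le _ _ _
  obtain ⟨a, hχL⟩ := hχL
  have hχK : ∀ x ∉ K, χ x = 0 := by
    intro x hx
    have hx : δ < dist x x₀ := by simpa [K] using hx
    refine max_eq_left (min_le_of_right_le ?_)
    have : 2 / δ * δ ≤ 2 / δ * dist x x₀ := by gcongr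
    rw [div_mul_cancel₀ _ hδ.ne'] at this
    linarith
  have hχin : ∀ x, dist x x₀ < δ / 2 → χ x = 1 := by
    intro x hx
    have : 2 / δ * dist x x₀ ≤ 2 / δ * (δ / 2) := by gcongr
    rw [div_mul_div_cancel₀ hδ.ne', div_self two_ne_zero] at this
    simp only [hχdef]
    rw [min_eq_left (by linarith), max_eq_right zero_le_one]
  have hχu := lipschitzWith_smul_of_eq_zero hχL hu
    (fun x => by rw [Real.norm_of_nonneg (hχ0 x)]; exact hχ1 x) hχK (B := B.toNNReal)
    (fun x hx => (hB x hx).trans (Real.le_coe_toNNReal B))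
  obtain ⟨x, hxK, hx0⟩ := exists_zero_of_eq_off_compact hP (hP.add hχu) hK
    (fun x hx => by simp [hχK x hx]) hσ
    (ball_subset_interior_closedBall (mem_ball_self hδ)) hPx₀
  have hx0 : P x + χ x • u x = 0 := hx0
  have hux : u x = q₁ x - P x := (hequ hxK).symm
  have happrox := hqq₁ x
  rw [dist_eq_norm] at happrox
  rcases lt_or_ge (dist x x₀) (δ / 2) with hx | hx
  · rw [hχin x hx, one_smul, hux, add_sub_cancel] at hx0
    rw [hx0, zero_sub, norm_neg] at happrox
    linarith [hcq x hxK, min_le_left c (m - m')]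
  · have h1 : ‖u x‖ < m := by
      have := norm_add_le (q₁ x - q x) (q x - P x)
      rw [sub_add_sub_cancel] at this
      rw [hux]
      linarith [hqP x hxK, min_le_right c (m - m')]
    have h2 : ‖P x‖ = χ x * ‖u x‖ := by
      rw [eq_neg_of_add_eq_zero_left hx0, norm_neg, norm_smul, Real.norm_of_nonneg (hχ0 x)]
    have h3 := mul_le_mul_of_nonneg_right (hχ1 x) (norm_nonneg (u x))
    linarith [hm x hxK hx]

end Main

/-! ### Images of perturbed linearizations -/

/-- Lemma 3.3 of the paper (weak implicit function theorem): if the tangent-mode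
piecewise linear model `P = Φ(x*,x*)` is coherently oriented on an open
neighborhood `D` of the root `x*` and the family `Φ` of continuous local models
is stable at `x*`, then there are radii `r, R > 0` so that for every
`α ∈ (0,1)` and reference points `x̌, x̂ ∈ B̄(x*,(1−α)R)` the ball `B(0,αr)` is
contained in the image `Φ(x̌,x̂)(D)`. -/
theorem ball_in_image_of_perturbed_linearization
    (n : ℕ) (D : Set (EuclideanSpace ℝ (Fin n))) (hD : IsOpen D)
    (xs : EuclideanSpace ℝ (Fin n)) (hxs : xs ∈ D)
    (P : EuclideanSpace ℝ (Fin n) → EuclideanSpace ℝ (Fin n))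
    (hPcont : Continuous P) (hProot : P xs = 0)
    (k : ℕ) (hk : 0 < k)
    (A : Fin k → (EuclideanSpace ℝ (Fin n) →L[ℝ] EuclideanSpace ℝ (Fin n)))
    (b : Fin k → EuclideanSpace ℝ (Fin n))
    (hdet : ∀ i j : Fin k,
      0 < LinearMap.det (A i).toLinearMap * LinearMap.det (A j).toLinearMap)
    (hsel : ∀ x ∈ D, ∃ i, P x = A i x + b i)
    (γ : ℝ) (hγ : 0 < γ)
    (Φ : EuclideanSpace ℝ (Fin n) → EuclideanSpace ℝ (Fin n) →
      (EuclideanSpace ℝ (Fin n) → EuclideanSpace ℝ (Fin n)))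
    (hΦcont : ∀ xc xh, Continuous (Φ xc xh))
    (hΦtangent : Φ xs xs = P)
    (hstab : ∀ x ∈ D, ∀ xc ∈ D, ∀ xh ∈ D,
      ‖Φ xc xh x - P x‖ ≤
        γ * (max ‖xc - xs‖ ‖xh - xs‖ * ‖x - xs‖ + (1 / 2) * ‖xc - xs‖ * ‖xh - xs‖)) :
    ∃ r > (0 : ℝ), ∃ R > (0 : ℝ), ∀ α ∈ Set.Ioo (0 : ℝ) 1,
      ∀ xc ∈ closedBall xs ((1 - α) * R), ∀ xh ∈ closedBall xs ((1 - α) * R),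
        ball 0 (α * r) ⊆ Φ xc xh '' D := by
  -- Each affine piece is injective, so `P` has finitely many zeros in `D`.
  have hinj : ∀ i, Function.Injective (A i) := fun i => by
    have hne : LinearMap.det (A i).toLinearMap ≠ 0 := fun h => by simpa [h] using hdet i i
    exact ((LinearMap.isUnit_iff_isUnit_det _).2 hne.isUnit |>
      (Module.End.isUnit_iff _).1).1
  have hfin : {x ∈ D | P x = 0}.Finite := by
    refine (finite_iUnion fun i : Fin k =>
      (?_ : {x | A i x + b i = 0}.Subsingleton).finite).subset ?_
    · intro x hx y hy
      exact hinj i (add_right_cancel (hx.trans hy.symm : A i x + b i = A i y + b i))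
    · rintro x ⟨hxD, hx⟩
      obtain ⟨i, hi⟩ := hsel x hxD
      exact mem_iUnion.2 ⟨i, hi.symm.trans hx⟩
  obtain ⟨δ₂, hδ₂, hball⟩ : ∃ δ > 0, closedBall xs δ ⊆ D ∩ ({x ∈ D | P x = 0} \ {xs})ᶜ :=
    nhds_basis_closedBall.mem_iff.1 (inter_mem (hD.mem_nhds hxs)
      ((hfin.subset sdiff_subset).isClosed.isOpen_compl.mem_nhds (by simp)))
  obtain ⟨L, hL⟩ := exists_lipschitzOnWith_of_selection hPcont (convex_closedBall xs δ₂)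
    (fun x hx => hsel x (hball hx).1)
  obtain ⟨P₁, hP₁, hPP₁⟩ := hL.extend_finite_dimension
  set δ := δ₂ / 2 with hδdef
  have hδ : 0 < δ := by positivity
  have hsub : closedBall xs δ ⊆ closedBall xs δ₂ := closedBall_subset_closedBall (by linarith)
  obtain ⟨m, hm, hmP⟩ := ((isCompact_closedBall xs δ).inter_right
    (isClosed_le continuous_const (by fun_prop) : IsClosed {x | δ / 2 ≤ dist x xs})).exists_forall_le'
    (f := fun x => ‖P x‖) (a := 0) (by fun_prop) (by
      rintro x ⟨hx, hx2⟩
      refine norm_pos_iff.2 fun h0 => (hball (hsub hx)).2 ⟨⟨(hball (hsub hx)).1, h0⟩, ?_⟩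
      rintro rfl
      have hx2 : δ / 2 ≤ dist x x := hx2
      rw [dist_self] at hx2
      linarith)
  set σ := LinearMap.det (A ⟨0, hk⟩).toLinearMap
  have hσ : ∀ x ∈ closedBall xs δ, DifferentiableAt ℝ P₁ x → 0 < σ * (fderiv ℝ P₁ x).det := by
    intro x hx hdiff
    have hnhds : closedBall xs δ₂ ∈ 𝓝 x := by
      refine closedBall_mem_nhds_of_mem ?_
      have : dist x xs ≤ δ := hx
      exact mem_ball.2 (by linarith)
    obtain ⟨i, hi⟩ := exists_eq_of_hasFDerivAt hP₁.continuous
      (by filter_upwards [hnhds] with y hy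
          rw [← hPP₁ hy]
          exact hsel y (hball hy).1) hdiff.hasFDerivAt
    rw [hi]
    exact hdet _ i
  -- The perturbation bound is `(1 - α) * γ * (R * δ + R ^ 2 / 2) ≤ (1 - α) * r`.
  set r := m / 2 with hr
  have hr0 : 0 < r := by positivity
  set R := min δ (r / (γ * (2 * δ))) with hRdef
  have hR : 0 < R := by positivity
  have hRδ : R ≤ δ := min_le_left _ _
  have hRγ : γ * (R * δ + 1 / 2 * R * R) ≤ r := by
    have h1 : R * (γ * (2 * δ)) ≤ r := (le_div_iff₀ (by positivity)).1 (min_le_right _ _)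
    have h2 : R * R ≤ R * δ := by gcongr
    nlinarith
  refine ⟨r, hr0, R, hR, fun α hα xc hxc xh hxh y hy => ?_⟩
  have hα1 : 0 < 1 - α := by linarith [hα.2]
  have hβ : (1 - α) * R ≤ R := by nlinarith [hα.1]
  have hxc' : ‖xc - xs‖ ≤ (1 - α) * R := by simpa [dist_eq_norm] using hxc
  have hxh' : ‖xh - xs‖ ≤ (1 - α) * R := by simpa [dist_eq_norm] using hxh
  have hD' : ∀ z, ‖z - xs‖ ≤ (1 - α) * R → z ∈ D := fun z hz =>
    (hball (hsub (mem_closedBall_iff_norm.2 (by linarith)))).1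
  have hy : ‖y‖ < α * r := by simpa using hy
  obtain ⟨x, hx, hx0⟩ := exists_zero_of_norm_sub_lt (q := fun x => Φ xc xh x - y) hP₁
    ((hΦcont xc xh).sub continuous_const) hδ hσ
    (by rw [← hPP₁ (mem_closedBall_self hδ₂.le), hProot])
    (fun x hx hx2 => by rw [← hPP₁ (hsub hx)]; exact hmP x ⟨hx, hx2⟩)
    (show r < m by linarith)
    (fun x hx => by
      have hxδ : ‖x - xs‖ ≤ δ := by simpa [dist_eq_norm] using hx
      have h1 := hstab x (hball (hsub hx)).1 xc (hD' xc hxc') xh (hD' xh hxh')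
      have h2 : γ * (max ‖xc - xs‖ ‖xh - xs‖ * ‖x - xs‖ + (1 / 2) * ‖xc - xs‖ * ‖xh - xs‖) ≤
          γ * ((1 - α) * R * δ + (1 / 2) * ((1 - α) * R) * R) := by
        gcongr
        · exact max_le hxc' hxh'
        · exact hxh'.trans hβ
      have h3 : γ * ((1 - α) * R * δ + (1 / 2) * ((1 - α) * R) * R) ≤ (1 - α) * r := by
        have := mul_le_mul_of_nonneg_left hRγ hα1.le
        linarith
      rw [← hPP₁ (hsub hx)]
      have h4 := norm_sub_le (Φ xc xh x - P x) y
      rw [sub_right_comm] at h4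
      linarith)
  exact ⟨x, (hball (hsub hx)).1, sub_eq_zero.1 hx0⟩
end

section
/- Let n ∈ ℕ and let F : ℝⁿ → ℝⁿ be continuous with F(x*) = 0. Let G : ℝⁿ → ℝⁿ satisfy G(x*) = 0 and, for some γ > 0, ‖G(x) − F(x)‖ ≤ (γ/2)·‖x − x*‖² for all x ∈ ℝⁿ. Assume G is strongly metrically regular near x* in the following sense: there exist c > 0, R̄ > 0, ρ > 0 and a continuous map g : B̄(0,ρ) → B̄(x*,R̄) such that G(g(v)) = v for all v ∈ B̄(0,ρ), and ‖u − g(v)‖ ≤ c·‖v − G(u)‖ for all u ∈ B̄(x*,R̄) and all v ∈ B̄(0,ρ). Then F is open at x*: there exists δ₀ > 0 such that for every δ with 0 < δ ≤ δ₀, the closed ball B̄(0, δ/(2c)) is contained in the image F(B̄(x*,δ)). -/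
/-!
Fix a small `δ` and `y` with `‖y‖ ≤ δ / (2c)`. On `closedBall xs δ` put
`T x = x + xs - g (F x - y)`. Metric regularity with `u = x`, `v = F x - y` gives
`‖T x - xs‖ ≤ c ‖F x - y - G x‖ ≤ c (‖y‖ + γ δ² / 2) ≤ δ`, so `T` is a continuous self-map of the
ball. A fixed point satisfies `g (F x - y) = xs`, hence `F x - y = G xs = 0`.

Brouwer's fixed-point theorem is proved from scratch (`brouwer_closedBall`), by a variant of the
analytic argument of Milnor and Rogers. It reduces to showing that `x ↦ x + φ x` has a zero for
every compactly supported `φ` of class `C¹`. Take a closed ball `B` about `0` outside which `φ`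
vanishes. For small `t ≥ 0` the map `h_t x = x + t φ x` is a bijection of `B` with positive
Jacobian, so the change of variables formula gives `∫_B w(h_t) det Dh_t = ∫_B w`. When `w` is the
polynomial `(1 - c‖x‖²)^m` the left-hand side is a polynomial in `t`, so the identity persists to
`t = 1` (`integral_weight_eq`). If `h_1` avoided the ball of radius `ε` about `0`, the left-hand
side would be `O((1 - cε²)^m)`, while the right-hand side is at least a positive multiple of
`(1 - cη²)^m` for some `η < ε`; letting `m → ∞` gives a contradiction. Continuous `φ` are handled by
smooth approximation with error smaller than `‖x + φ x‖`.
-/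

open Metric

section Brouwer
open MeasureTheory Polynomial

/-- The function `k x t` is a polynomial in `t` whose coefficients are continuous functions of `x`;
the polynomial is encoded with coefficients in the ring `C(X, ℝ)` and evaluated first at `x`, then
at `t`. -/
def PolyInTime {X : Type*} [TopologicalSpace X] (k : X → ℝ → ℝ) : Prop :=
  ∃ q : Polynomial C(X, ℝ), ∀ x t,
    k x t = (q.map (ContinuousMap.evalAlgHom ℝ ℝ x : C(X, ℝ) →+* ℝ)).eval t

namespace PolyInTime
variable {X : Type*} [TopologicalSpace X] {k l : X → ℝ → ℝ}

lemma of_continuous {f : X → ℝ} (hf : Continuous f) : PolyInTime fun x _ => f x :=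
  ⟨C ⟨f, hf⟩, fun x t => by simp⟩

lemma time : PolyInTime fun (_ : X) t => t := ⟨Polynomial.X, fun x t => by simp⟩

lemma add (hk : PolyInTime k) (hl : PolyInTime l) : PolyInTime fun x t => k x t + l x t := by
  obtain ⟨p, hp⟩ := hk
  obtain ⟨q, hq⟩ := hl
  exact ⟨p + q, fun x t => by simp [hp, hq]⟩

lemma mul (hk : PolyInTime k) (hl : PolyInTime l) : PolyInTime fun x t => k x t * l x t := by
  obtain ⟨p, hp⟩ := hk
  obtain ⟨q, hq⟩ := hl
  exact ⟨p * q, fun x t => by simp [hp, hq]⟩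

lemma pow (hk : PolyInTime k) (m : ℕ) : PolyInTime fun x t => k x t ^ m := by
  obtain ⟨p, hp⟩ := hk
  exact ⟨p ^ m, fun x t => by simp [hp]⟩

lemma det {ι : Type*} [Fintype ι] [DecidableEq ι] {M : X → ℝ → Matrix ι ι ℝ}
    (hM : ∀ i j, PolyInTime fun x t => M x t i j) : PolyInTime fun x t => (M x t).det := by
  choose p hp using hM
  refine ⟨(Matrix.of p).det, fun x t => ?_⟩
  rw [← coe_mapRingHom, ← coe_evalRingHom, RingHom.map_det, RingHom.map_det]
  refine congrArg Matrix.det (Matrix.ext fun i j => ?_)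
  simp [hp]

lemma integral {E : Type*} [NormedAddCommGroup E] [MeasurableSpace E] [BorelSpace E]
    {μ : Measure E} [IsFiniteMeasureOnCompacts μ] {B : Set E} (hB : IsCompact B)
    {k : E → ℝ → ℝ} (hk : PolyInTime k) : ∃ P : ℝ[X], ∀ t, ∫ x in B, k x t ∂μ = P.eval t := by
  obtain ⟨q, hq⟩ := hk
  refine ⟨∑ i ∈ q.support, monomial i (∫ x in B, q.coeff i x ∂μ), fun t => ?_⟩
  simp only [hq, eval_map, eval₂_eq_sum, Polynomial.sum, eval_finsetSum, eval_monomial]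
  rw [integral_finsetSum]
  · refine Finset.sum_congr rfl fun i _ => ?_
    rw [← integral_mul_const]
    rfl
  · intro i _
    exact (((q.coeff i).continuous.mul_const _).continuousOn.integrableOn_compact hB)

end PolyInTime

/-- A Lipschitz perturbation of the identity with constant less than `1` is bijective: preimages of
`y` are the fixed points of the contraction `x ↦ y - t • φ x`. -/
lemma bijective_add_smul {E : Type*} [NormedAddCommGroup E] [NormedSpace ℝ E] [CompleteSpace E]
    {φ : E → E} {K : NNReal} (hφ : LipschitzWith K φ) {t : ℝ} (ht : ‖t‖₊ * K < 1) :
    Function.Bijective fun x => x + t • φ x := by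
  have hc : ∀ y, ContractingWith (‖t‖₊ * K) fun x => y - t • φ x := fun y => by
    refine ⟨ht, ?_⟩
    simpa using (LipschitzWith.const y).sub ((lipschitzWith_smul t).comp hφ)
  constructor
  · intro x x' h
    refine (hc (x + t • φ x)).fixedPoint_unique' (x := x) (y := x') ?_ ?_
    · simp [Function.IsFixedPt]
    · have h : x + t • φ x = x' + t • φ x' := h
      simp [Function.IsFixedPt, h]
  · intro y
    have := (hc y).fixedPoint_isFixedPt
    refine ⟨_, eq_sub_iff_add_eq.1 this.symm⟩

/-- The determinant of `1 + s • A` does not vanish for `0 ≤ s ≤ t` and equals `1` at `s = 0`, so it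
stays positive. -/
lemma det_one_add_smul_pos {E : Type*} [NormedAddCommGroup E] [NormedSpace ℝ E]
    [FiniteDimensional ℝ E] (A : E →L[ℝ] E) {t : ℝ} (ht0 : 0 ≤ t) (ht : t * ‖A‖ < 1) :
    0 < (1 + t • A).det := by
  have hne : ∀ s ∈ Set.Icc 0 t, (1 + s • A).det ≠ 0 := by
    intro s hs h0
    obtain ⟨v, hv, hv0⟩ := (LinearMap.bot_lt_ker_of_det_eq_zero h0).ne' |> Submodule.exists_mem_ne_zero_of_ne_bot
    have h1 : v + s • A v = 0 := by simpa using hv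
    have h2 : ‖v‖ = s * ‖A v‖ := by
      rw [eq_neg_of_add_eq_zero_left h1, norm_neg, norm_smul, Real.norm_of_nonneg hs.1]
      congr 2
      rw [← eq_neg_of_add_eq_zero_left h1]
    have h3 : s * ‖A v‖ ≤ t * (‖A‖ * ‖v‖) :=
      mul_le_mul hs.2 (A.le_opNorm v) (norm_nonneg _) ht0
    have h4 : 0 < ‖v‖ := norm_pos_iff.2 hv0
    nlinarith
  by_contra! hneg
  have hcont : ContinuousOn (fun s : ℝ => (1 + s • A).det) (Set.Icc 0 t) := by
    have : Continuous fun s : ℝ => (1 + s • A).det :=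
      ContinuousLinearMap.continuous_det.comp (by fun_prop)
    exact this.continuousOn
  have h01 : (1 + (0:ℝ) • A).det = 1 := by
    simp [ContinuousLinearMap.det]
  obtain ⟨s, hs, h0⟩ := intermediate_value_Icc' ht0 hcont ⟨hneg, by rw [h01]; exact zero_le_one⟩
  exact hne s hs h0

variable {E : Type*} [NormedAddCommGroup E] [InnerProductSpace ℝ E]

lemma polyInTime_weight {φ : E → E} (hφ : Continuous φ) (c : ℝ) (m : ℕ) :
    PolyInTime fun x t => (1 - c * ‖x + t • φ x‖ ^ 2) ^ m := by
  refine PolyInTime.pow ?_ m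
  have h : ∀ x (t : ℝ), 1 - c * ‖x + t • φ x‖ ^ 2 =
      (1 - c * ‖x‖ ^ 2) + t * (-(2 * c * inner ℝ x (φ x)) + t * (-(c * ‖φ x‖ ^ 2))) := by
    intro x t
    rw [norm_add_sq_real, inner_smul_right, norm_smul, mul_pow, Real.norm_eq_abs, sq_abs]
    ring
  simp only [h]
  exact (PolyInTime.of_continuous (by fun_prop)).add (PolyInTime.time.mul
    ((PolyInTime.of_continuous (by fun_prop)).add
      (PolyInTime.time.mul (PolyInTime.of_continuous (by fun_prop)))))

variable [FiniteDimensional ℝ E]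

lemma image_closedBall_eq {φ : E → E} {K : NNReal} (hφ : LipschitzWith K φ) {R : ℝ}
    (hR : ∀ x, R < ‖x‖ → φ x = 0) {t : ℝ} (ht : ‖t‖₊ * K < 1) :
    (fun x => x + t • φ x) '' closedBall 0 R = closedBall 0 R := by
  have hbij := bijective_add_smul hφ ht
  have hout : ∀ x, R < ‖x‖ → x + t • φ x = x := fun x hx => by simp [hR x hx]
  ext y
  constructor
  · rintro ⟨x, hx, rfl⟩
    by_contra hy
    have hy : R < ‖x + t • φ x‖ := by simpa using hy
    have : x + t • φ x = x := hbij.1 (hout _ hy)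
    rw [this] at hy
    exact absurd (mem_closedBall_zero_iff.1 hx) (not_le.2 hy)
  · intro hy
    obtain ⟨x, rfl⟩ := hbij.2 y
    refine ⟨x, ?_, rfl⟩
    by_contra hx
    have hx : R < ‖x‖ := by simpa using hx
    have hy := mem_closedBall_zero_iff.1 hy
    simp only [hout x hx] at hy
    exact absurd hy (not_le.2 hx)

lemma polyInTime_det {φ : E → E} (hφ : ContDiff ℝ 1 φ) :
    PolyInTime fun x t => (1 + t • fderiv ℝ φ x).det := by
  set b := Module.finBasis ℝ E
  have hdet : ∀ x (t : ℝ), (1 + t • fderiv ℝ φ x).det =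
      (LinearMap.toMatrix b b (1 + t • (fderiv ℝ φ x : E →ₗ[ℝ] E))).det := fun x t => by
    rw [LinearMap.det_toMatrix]; rfl
  simp only [hdet]
  refine PolyInTime.det fun i j => ?_
  have hij : ∀ x (t : ℝ), LinearMap.toMatrix b b (1 + t • (fderiv ℝ φ x : E →ₗ[ℝ] E)) i j =
      b.repr (b j) i + t * b.repr (fderiv ℝ φ x (b j)) i := fun x t => by
    simp [LinearMap.toMatrix_apply]
  simp only [hij]
  refine (PolyInTime.of_continuous continuous_const).add
    (PolyInTime.time.mul (PolyInTime.of_continuous ?_))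
  have h1 : Continuous fun x => fderiv ℝ φ x (b j) :=
    (hφ.continuous_fderiv one_ne_zero).clm_apply continuous_const
  exact (b.coord i).continuous_of_finiteDimensional.comp h1

/-- The change of variables identity for `x ↦ x + φ x` with weight `(1 - c‖x‖²)^m`. It holds although
this map need not be injective, because it holds along `x ↦ x + t • φ x` for small `t > 0` and both
sides are polynomials in `t`. -/
lemma integral_weight_eq [MeasurableSpace E] [BorelSpace E]
    {φ : E → E} (hφ : ContDiff ℝ 1 φ) {R : ℝ}
    (hR : ∀ x, R < ‖x‖ → φ x = 0) (c : ℝ) (m : ℕ) :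
    ∫ x in closedBall (0 : E) R, (1 - c * ‖x + φ x‖ ^ 2) ^ m * (1 + fderiv ℝ φ x).det =
      ∫ x in closedBall (0 : E) R, (1 - c * ‖x‖ ^ 2) ^ m := by
  have hsupp : HasCompactSupport φ := HasCompactSupport.intro (isCompact_closedBall 0 R)
    fun x hx => hR x (by simpa using hx)
  obtain ⟨K, hK⟩ := hφ.lipschitzWith_of_hasCompactSupport hsupp one_ne_zero
  obtain ⟨P, hP⟩ := ((polyInTime_weight hφ.continuous c m).mul (polyInTime_det hφ)).integral
    (μ := volume) (isCompact_closedBall (0 : E) R)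
  have hsmall : ∀ t ∈ Set.Ioo (0 : ℝ) (1 / (K + 1)),
      P.eval t = ∫ x in closedBall (0 : E) R, (1 - c * ‖x‖ ^ 2) ^ m := by
    intro t ht
    have htK : t * K < 1 := by
      have := (lt_div_iff₀ (by positivity)).1 ht.2
      nlinarith [ht.1]
    have htK' : ‖t‖₊ * K < 1 := by
      rw [← NNReal.coe_lt_coe]
      simpa [abs_of_pos ht.1] using htK
    rw [← hP]
    conv_rhs => rw [← image_closedBall_eq hK hR htK']
    rw [integral_image_eq_integral_abs_det_fderiv_smul volume measurableSet_closedBall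
      (f' := fun x => 1 + t • fderiv ℝ φ x) _ (bijective_add_smul hK htK').1.injOn]
    · refine integral_congr_ae (Filter.Eventually.of_forall fun x => ?_)
      have hpos : 0 < (1 + t • fderiv ℝ φ x).det :=
        det_one_add_smul_pos _ ht.1.le ((mul_le_mul_of_nonneg_left
          (norm_fderiv_le_of_lipschitz ℝ hK) ht.1.le).trans_lt htK)
      simp only [abs_of_pos hpos, smul_eq_mul]
      ring
    · intro x _
      exact ((hasFDerivAt_id x).add
        (((hφ.differentiable one_ne_zero) x).hasFDerivAt.const_smul t)).hasFDerivWithinAt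
  have hPC : P = C (∫ x in closedBall (0 : E) R, (1 - c * ‖x‖ ^ 2) ^ m) := by
    refine eq_of_infinite_eval_eq _ _ ((Set.Ioo_infinite (a := (0 : ℝ))
      (b := 1 / (K + 1)) (by positivity)).mono fun t ht => ?_)
    simpa using hsmall t ht
  have := hP 1
  rw [hPC] at this
  simpa using this

/-- A `C¹` compactly supported perturbation of the identity has a zero. Otherwise
`integral_weight_eq` fails for large `m`, as the weight `(1 - c‖x‖²)^m` concentrates at the origin,
which `x ↦ x + φ x` avoids by a distance `ε`. -/
lemma exists_add_eq_zero_of_contDiff {φ : E → E} (hφ : ContDiff ℝ 1 φ)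
    (hsupp : HasCompactSupport φ) : ∃ x, x + φ x = 0 := by
  borelize E
  by_contra! hne
  obtain ⟨R, hRpos, hR⟩ : ∃ R > 0, ∀ x, R < ‖x‖ → φ x = 0 := by
    obtain ⟨R, hR0, hR⟩ := hsupp.isCompact.isBounded.subset_closedBall_lt 0 0
    refine ⟨R, hR0, fun x hx => image_eq_zero_of_notMem_tsupport fun h => ?_⟩
    have := mem_closedBall_zero_iff.1 (hR h)
    linarith
  set B := closedBall (0 : E) R with hBdef
  have hB : IsCompact B := isCompact_closedBall 0 R
  have hBne : B.Nonempty := ⟨0, by simp [hBdef, hRpos.le]⟩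
  have hφc := hφ.continuous
  have hcont : Continuous fun x => ‖x + φ x‖ := by fun_prop
  obtain ⟨x₀, -, hx₀⟩ := hB.exists_isMinOn hBne hcont.continuousOn
  obtain ⟨x₁, hx₁B, hx₁⟩ := hB.exists_isMaxOn hBne hcont.continuousOn
  have hdc : Continuous fun x => |(1 + fderiv ℝ φ x).det| :=
    (ContinuousLinearMap.continuous_det.comp
      (continuous_const.add (hφ.continuous_fderiv one_ne_zero))).abs
  obtain ⟨x₂, -, hx₂⟩ := hB.exists_isMaxOn hBne hdc.continuousOn
  set ε := ‖x₀ + φ x₀‖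
  have hε : 0 < ε := norm_pos_iff.2 (hne x₀)
  set D := |(1 + fderiv ℝ φ x₂).det|
  -- `N` bounds both `‖x‖` and `‖x + φ x‖` on `B`, so `c = 1 / N ^ 2` makes the weight nonnegative.
  set N := max ‖x₁ + φ x₁‖ R
  have hN : 0 < N := lt_max_of_lt_right hRpos
  set c := 1 / N ^ 2
  have hcpos : 0 < c := by positivity
  have hcN : ∀ r, 0 ≤ r → r ≤ N → 0 ≤ 1 - c * r ^ 2 := by
    intro r h0 h
    have : c * r ^ 2 ≤ c * N ^ 2 := by gcongr
    have h1 : c * N ^ 2 = 1 := by simp only [c]; field_simp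
    linarith
  set η := min (ε / 2) R
  have hη : 0 < η := lt_min (by linarith) hRpos
  have hηε : η < ε := (min_le_left _ _).trans_lt (by linarith)
  set a := 1 - c * ε ^ 2
  set b := 1 - c * η ^ 2
  have hεN : ε ≤ N := (hx₀ hx₁B).trans (le_max_left _ _)
  have ha : 0 ≤ a := hcN ε hε.le hεN
  have hab : a < b := by
    have : η ^ 2 < ε ^ 2 := by gcongr
    simp only [a, b]
    nlinarith
  have hb : 0 < b := ha.trans_lt hab
  set V := volume.real B
  set V' := volume.real (closedBall (0 : E) η)
  have hV' : 0 < V' := ENNReal.toReal_pos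
    (measure_closedBall_pos volume _ hη).ne' measure_closedBall_lt_top.ne
  have key : ∀ m : ℕ, V' * b ^ m ≤ a ^ m * D * V := by
    intro m
    have hlow : V' * b ^ m ≤ ∫ x in B, (1 - c * ‖x‖ ^ 2) ^ m := by
      have hint : IntegrableOn (fun x : E => (1 - c * ‖x‖ ^ 2) ^ m) B :=
        (by fun_prop : Continuous fun x : E => (1 - c * ‖x‖ ^ 2) ^ m).continuousOn
          |>.integrableOn_compact hB
      have hsub : closedBall (0 : E) η ⊆ B := closedBall_subset_closedBall (min_le_right _ _)
      calc V' * b ^ m = ∫ x in closedBall (0 : E) η, b ^ m := by simp [V']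
        _ ≤ ∫ x in closedBall (0 : E) η, (1 - c * ‖x‖ ^ 2) ^ m := by
          refine setIntegral_mono_on ?_ (hint.mono_set hsub) measurableSet_closedBall ?_
          · exact integrableOn_const measure_closedBall_lt_top.ne
          · intro x hx
            have hx := mem_closedBall_zero_iff.1 hx
            simp only [b]
            gcongr
        _ ≤ _ := by
          refine setIntegral_mono_set hint ?_ hsub.eventuallyLE
          refine (ae_restrict_iff' measurableSet_closedBall).2 (Filter.Eventually.of_forall ?_)
          intro x hx
          exact pow_nonneg (hcN _ (norm_nonneg _)
            ((mem_closedBall_zero_iff.1 hx).trans (le_max_right _ _))) m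
    rw [← integral_weight_eq hφ hR c m] at hlow
    refine hlow.trans ((le_abs_self _).trans ?_)
    rw [← Real.norm_eq_abs]
    refine norm_setIntegral_le_of_norm_le_const hB.measure_lt_top fun x hx => ?_
    rw [norm_mul, norm_pow, Real.norm_eq_abs, Real.norm_eq_abs]
    have h1 : 0 ≤ 1 - c * ‖x + φ x‖ ^ 2 :=
      hcN _ (norm_nonneg _) ((hx₁ hx).trans (le_max_left _ _))
    rw [abs_of_nonneg h1]
    have h2 : 1 - c * ‖x + φ x‖ ^ 2 ≤ a := by
      have : ε ≤ ‖x + φ x‖ := hx₀ hx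
      simp only [a]
      gcongr
    exact mul_le_mul (pow_le_pow_left₀ h1 h2 m) (hx₂ hx) (abs_nonneg _) (by positivity)
  have hlim : Filter.Tendsto (fun m : ℕ => (a / b) ^ m * (D * V)) Filter.atTop (nhds 0) := by
    simpa using (tendsto_pow_atTop_nhds_zero_of_lt_one (by positivity)
      ((div_lt_one hb).2 hab)).mul_const (D * V)
  have : V' ≤ 0 := ge_of_tendsto hlim (Filter.Eventually.of_forall fun m => by
    have hbm : 0 < b ^ m := by positivity
    rw [div_pow, div_mul_eq_mul_div, le_div_iff₀ hbm]
    linarith [key m])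
  linarith

/-- Continuous version of `exists_add_eq_zero_of_contDiff`: if `x + ψ x` never vanishes, a `C¹`
approximation of `ψ` with error less than `‖x + ψ x‖` never gives a zero either. -/
lemma exists_add_eq_zero {ψ : E → E} (hψ : Continuous ψ) (hsupp : HasCompactSupport ψ) :
    ∃ x, x + ψ x = 0 := by
  by_contra! hne
  obtain ⟨φ, hφ, hdist, hsub⟩ := hψ.exists_contDiff_approx 1 (ε := fun x => ‖x + ψ x‖)
    (by fun_prop) fun x => norm_pos_iff.2 (hne x)
  obtain ⟨x, hx⟩ := exists_add_eq_zero_of_contDiff (φ := φ) (by exact_mod_cast hφ)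
    (hsupp.mono hsub)
  have h := hdist x
  rw [eq_neg_of_add_eq_zero_right hx, dist_eq_norm, ← norm_neg] at h
  simp [add_comm] at h

/-- **Brouwer's fixed-point theorem** for a closed ball. Centre the ball at the origin, extend
`x ↦ z - T (z + x)` by a radial retraction `π` and a cutoff `χ` to a compactly supported map `ψ` of
norm at most `r`, and take a zero of `x + ψ x`: the norm bound forces it into the ball. -/
theorem brouwer_closedBall {z : E} {r : ℝ} (hr : 0 < r) {T : E → E}
    (hT : ContinuousOn T (closedBall z r)) (hmaps : Set.MapsTo T (closedBall z r) (closedBall z r)) :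
    ∃ x ∈ closedBall z r, T x = x := by
  set π : E → E := fun x => (r / max r ‖x‖) • x with hπdef
  have hmax : ∀ x : E, 0 < max r ‖x‖ := fun x => lt_max_of_lt_left hr
  have hπc : Continuous π := by
    refine Continuous.smul (continuous_const.div (by fun_prop) fun x => (hmax x).ne') continuous_id
  have hπ : ∀ x, z + π x ∈ closedBall z r := fun x => by
    have : ‖π x‖ ≤ r := by
      rw [hπdef, norm_smul, Real.norm_of_nonneg (div_nonneg hr.le (hmax x).le),
        div_mul_eq_mul_div, div_le_iff₀ (hmax x)]
      gcongr
      exact le_max_right _ _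
    simpa using this
  have hπid : ∀ x, ‖x‖ ≤ r → π x = x := fun x hx => by
    simp [hπdef, max_eq_left hx, hr.ne']
  set χ : E → ℝ := fun x => max 0 (min 1 (2 - ‖x‖ / r)) with hχdef
  have hχ1 : ∀ x, χ x ≤ 1 := fun x => max_le zero_le_one (min_le_left _ _)
  have hχ0 : ∀ x, 0 ≤ χ x := fun x => le_max_left _ _
  set ψ : E → E := fun x => -(χ x • (T (z + π x) - z)) with hψdef
  have hTc : Continuous fun x => T (z + π x) :=
    hT.comp_continuous (by fun_prop) hπ
  have hψc : Continuous ψ := by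
    have hχc : Continuous χ := by fun_prop
    exact (hχc.smul (hTc.sub continuous_const)).neg
  have hψs : HasCompactSupport ψ := by
    refine HasCompactSupport.intro (isCompact_closedBall (0 : E) (2 * r)) fun x hx => ?_
    have hx : 2 * r < ‖x‖ := by simpa using hx
    have : 2 - ‖x‖ / r ≤ 0 := by
      rw [sub_nonpos, le_div_iff₀ hr]; exact hx.le
    simp [hψdef, hχdef, max_eq_left ((min_le_right _ _).trans this)]
  obtain ⟨x, hx⟩ := exists_add_eq_zero hψc hψs
  have hx' : x = χ x • (T (z + π x) - z) := by
    simpa [hψdef, ← sub_eq_add_neg, sub_eq_zero] using hx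
  have hTn : ‖T (z + π x) - z‖ ≤ r := by
    simpa [dist_eq_norm] using hmaps (hπ x)
  have hxr : ‖x‖ ≤ r := by
    rw [hx', norm_smul, Real.norm_of_nonneg (hχ0 x)]
    nlinarith [hχ0 x, hχ1 x, norm_nonneg (T (z + π x) - z)]
  have hχx : χ x = 1 := by
    have : ‖x‖ / r ≤ 1 := (div_le_one hr).2 hxr
    simp only [hχdef]
    rw [min_eq_left (by linarith), max_eq_right zero_le_one]
  rw [hχx, one_smul, hπid x hxr, eq_sub_iff_add_eq, add_comm] at hx'
  exact ⟨z + x, by simpa using hxr, hx'.symm⟩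

end Brouwer

/-- "Necessary condition for open linearization" (the paper's Proposition):
if `G` approximates `F` with second order error at the root `x*` and is
strongly metrically regular near `x*` (with a continuous local inverse `g`),
then `F` is open at `x*`: for all small `δ > 0`, `B̄(0, δ/(2c)) ⊆ F(B̄(x*,δ))`. -/
theorem openness_from_metrically_regular_linearization
    (n : ℕ) (F : EuclideanSpace ℝ (Fin n) → EuclideanSpace ℝ (Fin n))
    (hF : Continuous F) (xs : EuclideanSpace ℝ (Fin n)) (hFroot : F xs = 0)
    (G : EuclideanSpace ℝ (Fin n) → EuclideanSpace ℝ (Fin n)) (hGroot : G xs = 0)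
    (γ : ℝ) (hγ : 0 < γ)
    (happrox : ∀ x, ‖G x - F x‖ ≤ γ / 2 * ‖x - xs‖ ^ 2)
    (c Rb ρ : ℝ) (hc : 0 < c) (hRb : 0 < Rb) (hρ : 0 < ρ)
    (g : EuclideanSpace ℝ (Fin n) → EuclideanSpace ℝ (Fin n))
    (hgcont : ContinuousOn g (closedBall 0 ρ))
    (hgmaps : ∀ v ∈ closedBall 0 ρ, g v ∈ closedBall xs Rb)
    (hginv : ∀ v ∈ closedBall 0 ρ, G (g v) = v)
    (hreg : ∀ u ∈ closedBall xs Rb, ∀ v ∈ closedBall (0 : EuclideanSpace ℝ (Fin n)) ρ,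
      ‖u - g v‖ ≤ c * ‖v - G u‖) :
    ∃ δ₀ > (0 : ℝ), ∀ δ : ℝ, 0 < δ → δ ≤ δ₀ →
      closedBall 0 (δ / (2 * c)) ⊆ F '' closedBall xs δ := by
  obtain ⟨d, hd, hFd⟩ : ∃ d > 0, ∀ x, ‖x - xs‖ < d → ‖F x‖ < ρ / 2 := by
    obtain ⟨d, hd, h⟩ := Metric.continuous_iff.1 hF xs (ρ / 2) (by positivity)
    exact ⟨d, hd, fun x hx => by simpa [hFroot, dist_eq_norm] using h x (by rwa [dist_eq_norm])⟩
  -- `d / 2` and `ρ * c` keep `F x - y` in the domain of `g`, `Rb` keeps `x` where regularity holds,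
  -- and `1 / (c * γ)` makes the quadratic error at most `δ / 2`.
  refine ⟨min (min (d / 2) Rb) (min (ρ * c) (1 / (c * γ))), by positivity, ?_⟩
  intro δ hδ hδ₀ y hy
  simp only [le_min_iff] at hδ₀
  obtain ⟨⟨hδd, hδR⟩, hδρ, hδγ⟩ := hδ₀
  have hy : ‖y‖ ≤ δ / (2 * c) := mem_closedBall_zero_iff.1 hy
  have hyρ : ‖y‖ ≤ ρ / 2 := by
    refine hy.trans ?_
    rw [div_le_iff₀ (by positivity)]
    linarith
  have hmem : ∀ x ∈ closedBall xs δ, F x - y ∈ closedBall 0 ρ := fun x hx => by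
    have hx : ‖x - xs‖ ≤ δ := by simpa [dist_eq_norm] using hx
    have := hFd x (by linarith)
    rw [mem_closedBall_zero_iff]
    linarith [norm_sub_le (F x) y]
  obtain ⟨x, hx, hfix⟩ := brouwer_closedBall (z := xs) hδ (T := fun x => x + xs - g (F x - y))
    ((by fun_prop : Continuous fun x => x + xs).continuousOn.sub
      (hgcont.comp (by fun_prop) hmem)) (by
    intro x hx
    have hxR := closedBall_subset_closedBall hδR hx
    have h1 := hreg x hxR _ (hmem x hx)
    have hx : ‖x - xs‖ ≤ δ := by simpa [dist_eq_norm] using hx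
    have h2 : ‖F x - y - G x‖ ≤ γ / 2 * δ ^ 2 + δ / (2 * c) := by
      have e : F x - y - G x = -(G x - F x) - y := by abel
      rw [e]
      refine (norm_sub_le _ _).trans ?_
      rw [norm_neg]
      have : γ / 2 * ‖x - xs‖ ^ 2 ≤ γ / 2 * δ ^ 2 := by gcongr
      linarith [happrox x]
    have h3 : c * (γ / 2 * δ ^ 2 + δ / (2 * c)) ≤ δ := by
      have : δ * (c * γ) ≤ 1 := (le_div_iff₀ (by positivity)).1 hδγ
      have e : c * (γ / 2 * δ ^ 2 + δ / (2 * c)) = δ * (δ * (c * γ)) / 2 + δ / 2 := by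
        field_simp
      rw [e]
      nlinarith
    have e : x + xs - g (F x - y) - xs = x - g (F x - y) := by abel
    rw [mem_closedBall, dist_eq_norm, e]
    exact h1.trans ((mul_le_mul_of_nonneg_left h2 hc.le).trans h3))
  refine ⟨x, hx, ?_⟩
  have hgx : g (F x - y) = xs := by
    rw [sub_eq_iff_eq_add] at hfix
    exact (add_left_cancel hfix).symm
  have := hginv _ (hmem x hx)
  rw [hgx, hGroot] at this
  exact (sub_eq_zero.1 this.symm)
end

section
/- Let s ∈ ℕ and let S be a real s×s matrix. Define F_S : ℝˢ → ℝˢ by F_S(z) = z − S·|z|, where |z| denotes the componentwise absolute value of z. If the determinants det(I − S·Σ), for Σ ranging over all diagonal s×s matrices with every diagonal entry equal to +1 or −1, are all nonzero and all of the same sign, then F_S is bijective. -/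
/-!
The determinant `det (1 - S * diagonal d)` is affine in each `d i` separately, so its values on the
cube `[-1, 1]ˢ` are convex combinations of its values at the vertices. The hypothesis therefore
gives `det (1 - S * diagonal d) ≠ 0` on the whole cube (`det_ne_zero_of_abs_le_one`), or, in the
form used below: `v = 0` whenever `v = S w` with `|w i| ≤ |v i|` for all `i`, and whenever
`|v i| ≤ |(Sᵀ v) i|` for all `i` (write the smaller vector as `diagonal d` times the larger one,
with `d` in the cube).

*Injectivity.* If `F z = F w` then `z - w = S (|z| - |w|)`, and `||z i| - |w i|| ≤ |z i - w i|`.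

*Surjectivity.* By injectivity and positive homogeneity `F` is bounded below by a multiple of the
norm, so `z ↦ ∑ i, (F z i - c i) ^ 2` attains its minimum. Let `r = F z - c` at a minimizer. Moving
the `j`-th coordinate by `t` changes half the objective by at most
`r j * t - (|z j + t| - |z j|) * (Sᵀ r) j + O(t ^ 2)`, and the middle term is at most
`|t| * |(Sᵀ r) j|`; minimality forces `|r j| ≤ |(Sᵀ r) j|` for every `j`, hence `r = 0`.
-/

/-- The determinant is affine in the `j`-th diagonal entry, expressed as interpolation between the
two vertex values. -/
lemma det_one_sub_mul_diagonal_interp {s : ℕ} (S : Matrix (Fin s) (Fin s) ℝ) (d : Fin s → ℝ)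
    (j : Fin s) :
    (1 - S * Matrix.diagonal d).det =
      (1 + d j) / 2 * (1 - S * Matrix.diagonal (Function.update d j 1)).det +
      (1 - d j) / 2 * (1 - S * Matrix.diagonal (Function.update d j (-1))).det := by
  have key : ∀ x : ℝ, (1 - S * Matrix.diagonal (Function.update d j x)).det =
      ((1 - S * Matrix.diagonal d).updateCol j (fun i => (1 : Matrix (Fin s) (Fin s) ℝ) i j)).det +
      x * ((1 - S * Matrix.diagonal d).updateCol j (fun i => - S i j)).det := by
    intro x
    rw [← Matrix.det_updateCol_smul, ← Matrix.det_updateCol_add]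
    congr 1
    ext i k
    by_cases hk : k = j
    · subst hk
      simp [Matrix.mul_diagonal]
      ring
    · simp [Matrix.mul_diagonal, hk]
  have h0 := key (d j)
  rw [Function.update_eq_self] at h0
  rw [key 1, key (-1), h0]
  ring

lemma det_ne_zero_of_abs_le_one {s : ℕ} (S : Matrix (Fin s) (Fin s) ℝ)
    (hsign : ∀ σ τ : Fin s → ℝ,
      (∀ i, σ i = 1 ∨ σ i = -1) → (∀ i, τ i = 1 ∨ τ i = -1) →
      0 < (1 - S * Matrix.diagonal σ).det * (1 - S * Matrix.diagonal τ).det)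
    (d : Fin s → ℝ) (hd : ∀ i, |d i| ≤ 1) : (1 - S * Matrix.diagonal d).det ≠ 0 := by
  -- Induct on the set `T` of coordinates allowed to be interior to `[-1, 1]`.
  have main : ∀ (T : Finset (Fin s)) (d : Fin s → ℝ), (∀ i, |d i| ≤ 1) →
      (∀ i, i ∉ T → d i = 1 ∨ d i = -1) →
      0 < (1 - S * Matrix.diagonal d).det * (1 - S * Matrix.diagonal (fun _ => (1 : ℝ))).det := by
    intro T
    induction T using Finset.induction_on with
    | empty =>
      intro d _ h
      exact hsign _ _ (fun i => h i (by simp)) (fun _ => Or.inl rfl)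
    | insert j T hj ih =>
      intro d hd h
      have hstep : ∀ x : ℝ, (x = 1 ∨ x = -1) →
          0 < (1 - S * Matrix.diagonal (Function.update d j x)).det *
            (1 - S * Matrix.diagonal (fun _ => (1 : ℝ))).det := by
        intro x hx
        apply ih
        · intro i
          by_cases hi : i = j
          · subst hi
            rcases hx with rfl | rfl <;> simp
          · simpa [hi] using hd i
        · intro i hiT
          by_cases hi : i = j
          · subst hi
            simpa using hx
          · simpa [hi] using h i (by simp [hi, hiT])
      have h1 := hstep 1 (Or.inl rfl)
      have h2 := hstep (-1) (Or.inr rfl)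
      obtain ⟨hl, hu⟩ := abs_le.mp (hd j)
      rw [det_one_sub_mul_diagonal_interp S d j, add_mul, mul_assoc, mul_assoc]
      rcases le_total 0 (d j) with h0 | h0
      · exact add_pos_of_pos_of_nonneg (mul_pos (by linarith) h1)
          (mul_nonneg (by linarith) h2.le)
      · exact add_pos_of_nonneg_of_pos (mul_nonneg (by linarith) h1.le)
          (mul_pos (by linarith) h2)
  intro h
  have := main Finset.univ d hd (fun i hi => absurd (Finset.mem_univ i) hi)
  rw [h, zero_mul] at this
  exact lt_irrefl _ this

lemma exists_mul_of_abs_le {ι : Type*} {v w : ι → ℝ} (h : ∀ i, |w i| ≤ |v i|) :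
    ∃ d : ι → ℝ, (∀ i, |d i| ≤ 1) ∧ ∀ i, w i = d i * v i := by
  -- Where `v i = 0` also `w i = 0`, so the value `w i / 0 = 0` is a correct choice.
  refine ⟨fun i => w i / v i, fun i => ?_, fun i => ?_⟩
  · rw [abs_div]
    exact div_le_one_of_le₀ (h i) (abs_nonneg _)
  · rcases eq_or_ne (v i) 0 with hv | hv
    · have := h i
      rw [hv, abs_zero] at this
      simp [hv, abs_nonpos_iff.mp this]
    · simp [hv]

/-- First-order condition for minimizing along a coordinate through a kink of `|·|`. -/
lemma abs_le_abs_of_forall_nonneg {r q a C : ℝ}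
    (h : ∀ t : ℝ, 0 ≤ r * t - (|a + t| - |a|) * q + C * t ^ 2) : |r| ≤ |q| := by
  by_contra! hlt
  -- A step of length `η` against the sign of `r`, short enough for the linear gain to dominate.
  set η : ℝ := (|r| - |q|) / (2 * (|C| + 1)) with hη
  have hC : 0 < |C| + 1 := by positivity
  have hη0 : 0 < η := by
    rw [hη]
    exact div_pos (by linarith) (by positivity)
  have hηC : η * (2 * (|C| + 1)) = |r| - |q| := by
    rw [hη]
    field_simp
  have bound : ∀ t : ℝ, |t| = η → r * t = -(|r| * η) → False := by
    intro t ht hrt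
    have h1 := h t
    have h2 : |(|a + t| - |a|) * q| ≤ η * |q| := by
      rw [abs_mul, ← ht]
      refine mul_le_mul_of_nonneg_right ?_ (abs_nonneg q)
      simpa using abs_abs_sub_abs_le_abs_sub (a + t) a
    have h3 := (abs_le.mp h2).1
    have h4 : t ^ 2 = η ^ 2 := by rw [← sq_abs, ht]
    have h5 : C * η ^ 2 ≤ |C| * η ^ 2 := by
      gcongr
      exact le_abs_self C
    rw [h4, hrt] at h1
    nlinarith [mul_pos hη0 hη0, mul_nonneg (abs_nonneg C) (sq_nonneg η)]
  rcases le_total 0 r with hr | hr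
  · exact bound (-η) (by rw [abs_neg, abs_of_pos hη0]) (by rw [abs_of_nonneg hr]; ring)
  · exact bound η (abs_of_pos hη0) (by rw [abs_of_nonpos hr]; ring)

/-- An injective, continuous, positively homogeneous map on `ℝˢ` is bounded below by a positive
multiple of the norm. -/
lemma exists_mul_norm_le {s : ℕ} {F : (Fin s → ℝ) → (Fin s → ℝ)} (hF : Continuous F)
    (hinj : Function.Injective F) (hhom : ∀ a : ℝ, 0 ≤ a → ∀ z, F (a • z) = a • F z) :
    ∃ m : ℝ, 0 < m ∧ ∀ z, m * ‖z‖ ≤ ‖F z‖ := by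
  have hF0 : F 0 = 0 := by simpa using hhom 0 le_rfl 0
  rcases (Metric.sphere (0 : Fin s → ℝ) 1).eq_empty_or_nonempty with he | hne
  · refine ⟨1, one_pos, fun z => ?_⟩
    rcases eq_or_ne z 0 with rfl | hz
    · simp
    · have : (‖z‖⁻¹ • z) ∈ Metric.sphere (0 : Fin s → ℝ) 1 := by
        simp [norm_smul, hz]
      simp [he] at this
  · obtain ⟨x, hx, hmin⟩ := (isCompact_sphere (0 : Fin s → ℝ) 1).exists_isMinOn hne
      hF.norm.continuousOn
    have hx1 : ‖x‖ = 1 := by simpa using hx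
    refine ⟨‖F x‖, norm_pos_iff.mpr fun h => ?_, fun z => ?_⟩
    · have : x = 0 := hinj (h.trans hF0.symm)
      simp [this] at hx1
    · rcases eq_or_ne z 0 with rfl | hz
      · simp
      · have hz' : 0 < ‖z‖ := norm_pos_iff.mpr hz
        have hmem : (‖z‖⁻¹ • z) ∈ Metric.sphere (0 : Fin s → ℝ) 1 := by
          simp [norm_smul, hz]
        have h1 : ‖F x‖ ≤ ‖F (‖z‖⁻¹ • z)‖ := hmin hmem
        rw [hhom _ (by positivity), norm_smul, norm_inv, norm_norm, inv_mul_eq_div,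
          le_div_iff₀ hz'] at h1
        exact h1

/-- If `F` grows at least linearly, the squared distance from `F z` to `c` attains its minimum. -/
lemma exists_min_sq_dist {s : ℕ} {F : (Fin s → ℝ) → (Fin s → ℝ)} (hF : Continuous F)
    {m : ℝ} (hm : 0 < m) (hbd : ∀ z, m * ‖z‖ ≤ ‖F z‖) (c : Fin s → ℝ) :
    ∃ z, ∀ y, ∑ i, (F z i - c i) ^ 2 ≤ ∑ i, (F y i - c i) ^ 2 := by
  have hcont : Continuous fun z => ∑ i, (F z i - c i) ^ 2 := by fun_prop
  refine hcont.exists_forall_le' 0 ?_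
  set G : ℝ := ∑ i, (F 0 i - c i) ^ 2 with hG
  have hG0 : 0 ≤ G := Finset.sum_nonneg fun i _ => sq_nonneg _
  have hev := (tendsto_norm_cocompact_atTop (E := Fin s → ℝ)).eventually_gt_atTop
    ((‖c‖ + (G + 1)) / m)
  filter_upwards [hev] with z hz
  by_contra! hlt
  have h1 : ‖F z - c‖ ≤ G + 1 := by
    rw [pi_norm_le_iff_of_nonneg (by linarith)]
    intro i
    have h2 : (F z i - c i) ^ 2 ≤ ∑ i, (F z i - c i) ^ 2 :=
      Finset.single_le_sum (f := fun i => (F z i - c i) ^ 2) (fun i _ => sq_nonneg _)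
        (Finset.mem_univ i)
    rw [Real.norm_eq_abs, Pi.sub_apply]
    exact abs_le_of_sq_le_sq (by nlinarith) (by linarith)
  have h2 : ‖F z‖ ≤ ‖F z - c‖ + ‖c‖ := by simpa using norm_add_le (F z - c) c
  rw [div_lt_iff₀ hm] at hz
  linarith [hbd z]

/-- Analytical core of Lemma 4.1 of the paper: if all determinants
`det(I − S·Σ)`, for `Σ` ranging over the signature matrices, are nonzero and
of the same sign, then the piecewise linear map `F_S(z) = z − S|z|` is
bijective. -/
theorem bijective_of_coherently_oriented_AVE
    (s : ℕ) (S : Matrix (Fin s) (Fin s) ℝ)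
    (hsign : ∀ σ τ : Fin s → ℝ,
      (∀ i, σ i = 1 ∨ σ i = -1) → (∀ i, τ i = 1 ∨ τ i = -1) →
      0 < (1 - S * Matrix.diagonal σ).det * (1 - S * Matrix.diagonal τ).det) :
    Function.Bijective (fun z : Fin s → ℝ => z - S.mulVec (fun i => |z i|)) := by
  have hdet := det_ne_zero_of_abs_le_one S hsign
  set F : (Fin s → ℝ) → (Fin s → ℝ) := fun z => z - S.mulVec (fun i => |z i|) with hFdef
  have hinj : Function.Injective F := by
    intro z w hzw
    obtain ⟨d, hd, hdw⟩ := exists_mul_of_abs_le (v := fun i => z i - w i)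
      (w := fun i => |z i| - |w i|) (fun i => abs_abs_sub_abs_le_abs_sub _ _)
    have hsub : (z - w) - S.mulVec ((fun i => |z i|) - fun i => |w i|) = 0 := by
      have h : z - S.mulVec (fun i => |z i|) = w - S.mulVec (fun i => |w i|) := hzw
      rw [Matrix.mulVec_sub, sub_sub_sub_comm, h, sub_self]
    have hker : (1 - S * Matrix.diagonal d).mulVec (z - w) = 0 := by
      rw [Matrix.sub_mulVec, Matrix.one_mulVec, ← Matrix.mulVec_mulVec, ← hsub]
      congr 2
      ext i
      simp [Matrix.mulVec_diagonal, hdw i]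
    exact sub_eq_zero.mp (Matrix.eq_zero_of_mulVec_eq_zero (hdet d hd) hker)
  refine ⟨hinj, fun c => ?_⟩
  have hcont : Continuous F := by
    refine continuous_id.sub (Continuous.matrix_mulVec continuous_const ?_)
    fun_prop
  have hhom : ∀ a : ℝ, 0 ≤ a → ∀ z, F (a • z) = a • F z := by
    intro a ha z
    have : (fun i => |(a • z) i|) = a • fun i => |z i| := by
      ext i
      simp [abs_mul, abs_of_nonneg ha]
    simp only [hFdef]
    rw [this, Matrix.mulVec_smul, smul_sub]
  obtain ⟨m, hm, hbd⟩ := exists_mul_norm_le hcont hinj hhom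
  obtain ⟨z, hz⟩ := exists_min_sq_dist hcont hm hbd c
  refine ⟨z, ?_⟩
  set r : Fin s → ℝ := F z - c with hr
  have hrq : ∀ j, |r j| ≤ |(Matrix.vecMul r S) j| := by
    intro j
    let e : Fin s → ℝ := Pi.single j 1
    refine abs_le_abs_of_forall_nonneg (a := z j)
      (C := ∑ i, (|e i| + |S i j|) ^ 2 / 2) fun t => ?_
    set ε := |z j + t| - |z j| with hε
    have hεt : |ε| ≤ |t| := by simpa using abs_abs_sub_abs_le_abs_sub (z j + t) (z j)
    have hF : ∀ i, F (z + t • e) i - c i = r i + (e i * t - ε * S i j) := by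
      intro i
      have habs : (fun i => |(z + t • e) i|) = (fun i => |z i|) + Pi.single j ε := by
        ext k
        by_cases hk : k = j
        · subst hk
          simp [e, hε]
        · simp [e, hk]
      simp only [hr, hFdef]
      rw [habs, Matrix.mulVec_add]
      simp
      ring
    have hsq : ∀ i, (e i * t - ε * S i j) ^ 2 ≤ (|e i| + |S i j|) ^ 2 * t ^ 2 := by
      intro i
      rw [← sq_abs t, ← mul_pow]
      refine sq_le_sq' ?_ ?_ <;>
      · have h1 : |e i * t| = |e i| * |t| := abs_mul _ _
        have h2 : |ε * S i j| ≤ |t| * |S i j| := by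
          rw [abs_mul]
          gcongr
        have h3 := abs_le.mp h1.le
        have h4 := abs_le.mp h2
        linarith [h3.1, h3.2, h4.1, h4.2]
    have hmin := hz (z + t • e)
    have hle : ∑ i, (F (z + t • e) i - c i) ^ 2 ≤
        ∑ i, ((F z i - c i) ^ 2 + 2 * (r i * e i * t) - 2 * (ε * (r i * S i j)) +
          2 * ((|e i| + |S i j|) ^ 2 / 2 * t ^ 2)) := by
      refine Finset.sum_le_sum fun i _ => ?_
      have : F z i - c i = r i := rfl
      rw [hF i, this]
      linarith [hsq i]
    have hej : ∑ i, r i * e i = r j := by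
      simp [e, Pi.single_apply]
    have hq : Matrix.vecMul r S j = ∑ i, r i * S i j := rfl
    rw [Finset.sum_add_distrib, Finset.sum_sub_distrib, Finset.sum_add_distrib,
      ← Finset.mul_sum, ← Finset.mul_sum, ← Finset.mul_sum, ← Finset.mul_sum,
      ← Finset.sum_mul, ← Finset.sum_mul, hej, ← hq] at hle
    linarith
  obtain ⟨d, hd, hdr⟩ := exists_mul_of_abs_le hrq
  -- `r = D Sᵀ r` for `D = diagonal d`, which on row vectors reads `r ᵥ* (1 - S * D) = 0`.
  have hker : Matrix.vecMul r (1 - S * Matrix.diagonal d) = 0 := by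
    rw [Matrix.vecMul_sub, Matrix.vecMul_one, ← Matrix.vecMul_vecMul]
    ext i
    rw [Pi.sub_apply, Matrix.vecMul_diagonal, hdr i, Pi.zero_apply]
    ring
  exact sub_eq_zero.mp (Matrix.eq_zero_of_vecMul_eq_zero (hdet d hd) hker)
end

section
/- Let s ∈ ℕ and let S be a real s×s matrix. Suppose the determinants det(I − S·Σ), for Σ ranging over all diagonal s×s matrices with diagonal entries in {−1, +1}, are all nonzero and all of the same sign. Then det(I − S·Σ) > 0 for every such Σ. -/
/-!
The function `f σ = det (1 - S * diagonal σ)` is affine in each coordinate `σ i` separately, because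
`σ i` enters only the `i`-th column, and affinely. Hence its value at `σ i = 0` is the mean of its
values at `σ i = ±1`. If `f` were negative at every sign vector, averaging over one coordinate at a
time would make it negative at `σ = 0`, where `f 0 = det 1 = 1`.
-/

/-- Changing the `i`-th diagonal entry of `Σ` only changes the `i`-th column of `1 - S * Σ`. -/
lemma one_sub_mul_diagonal_update {s : ℕ} (S : Matrix (Fin s) (Fin s) ℝ) (σ : Fin s → ℝ)
    (i : Fin s) (c : ℝ) :
    1 - S * Matrix.diagonal (Function.update σ i c) =
      (1 - S * Matrix.diagonal σ).updateCol i
        (fun k => (1 : Matrix (Fin s) (Fin s) ℝ) k i - S k i * c) := by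
  ext k j
  by_cases h : j = i
  · subst h
    simp [Matrix.mul_diagonal]
  · simp [Matrix.mul_diagonal, h]

/-- The midpoint identity expressing that the determinant is affine in the `i`-th entry of `Σ`. -/
lemma det_update_one_add_det_update_neg_one {s : ℕ} (S : Matrix (Fin s) (Fin s) ℝ)
    (σ : Fin s → ℝ) (i : Fin s) :
    (1 - S * Matrix.diagonal (Function.update σ i 1)).det +
      (1 - S * Matrix.diagonal (Function.update σ i (-1))).det =
      2 * (1 - S * Matrix.diagonal (Function.update σ i 0)).det := by
  simp only [one_sub_mul_diagonal_update]
  rw [← Matrix.det_updateCol_add, ← Matrix.det_updateCol_smul]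
  congr 2
  ext k
  simp only [Pi.add_apply, Pi.smul_apply, smul_eq_mul]
  ring

/-- Negativity at all sign vectors passes to the vectors that vanish on `T` and are `±1` elsewhere:
each such vector is a midpoint of two with one zero fewer. -/
lemma det_neg_of_zero_on {s : ℕ} (S : Matrix (Fin s) (Fin s) ℝ)
    (hneg : ∀ σ : Fin s → ℝ, (∀ i, σ i = 1 ∨ σ i = -1) → (1 - S * Matrix.diagonal σ).det < 0)
    (T : Finset (Fin s)) :
    ∀ σ : Fin s → ℝ, (∀ i ∈ T, σ i = 0) → (∀ i ∉ T, σ i = 1 ∨ σ i = -1) →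
      (1 - S * Matrix.diagonal σ).det < 0 := by
  induction T using Finset.induction_on with
  | empty => exact fun σ _ h => hneg σ fun i => h i (Finset.notMem_empty i)
  | insert i T hi ih =>
    intro σ h0 h1
    have key : ∀ c : ℝ, (c = 1 ∨ c = -1) →
        (1 - S * Matrix.diagonal (Function.update σ i c)).det < 0 := by
      intro c hc
      apply ih
      · intro j hj
        have hji : j ≠ i := fun h => hi (h ▸ hj)
        rw [Function.update_of_ne hji]
        exact h0 j (Finset.mem_insert_of_mem hj)
      · intro j hj
        by_cases hji : j = i
        · subst hji
          simpa using hc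
        · rw [Function.update_of_ne hji]
          exact h1 j (by simp [hji, hj])
    have hσ : Function.update σ i 0 = σ := by
      rw [← h0 i (Finset.mem_insert_self i T), Function.update_eq_self]
    have hmid := det_update_one_add_det_update_neg_one S σ i
    rw [hσ] at hmid
    linarith [key 1 (Or.inl rfl), key (-1) (Or.inr rfl)]

/-- From the proof of Lemma 4.1 of the paper: if the determinants
`det(I − S·Σ)`, for `Σ` ranging over all signature matrices, are all nonzero
and of the same sign, then that common sign is positive. -/
theorem positive_det_of_coherently_oriented_AVE
    (s : ℕ) (S : Matrix (Fin s) (Fin s) ℝ)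
    (hsign : ∀ σ τ : Fin s → ℝ,
      (∀ i, σ i = 1 ∨ σ i = -1) → (∀ i, τ i = 1 ∨ τ i = -1) →
      0 < (1 - S * Matrix.diagonal σ).det * (1 - S * Matrix.diagonal τ).det) :
    ∀ σ : Fin s → ℝ, (∀ i, σ i = 1 ∨ σ i = -1) →
      0 < (1 - S * Matrix.diagonal σ).det := by
  intro σ hσ
  by_contra hle
  have hσneg : (1 - S * Matrix.diagonal σ).det < 0 :=
    lt_of_le_of_ne (not_lt.mp hle) fun h => by simpa [h] using hsign σ σ hσ hσ
  have h := det_neg_of_zero_on S (fun τ hτ => by nlinarith [hsign σ τ hσ hτ])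
    Finset.univ (fun _ => 0) (by simp) (by simp)
  have hzero : Matrix.diagonal (fun _ : Fin s => (0 : ℝ)) = 0 := Matrix.diagonal_zero
  rw [hzero, mul_zero, sub_zero, Matrix.det_one] at h
  linarith
end

section
/- Let s ∈ ℕ and let S be a real s×s matrix. Then there exists a diagonal s×s matrix Σ with every diagonal entry equal to +1 or −1 such that det(I − S·Σ) ≥ 0. Equivalently, the 2ˢ determinants det(I − S·Σ), Σ ranging over all signature matrices, cannot all be negative. -/
/-! Column `i` of `1 - S * diagonal σ` depends only on `σ i`, and affinely, so the determinant is
affine in each `σ i` separately (`det_one_sub_mul_diagonal_update`). Its value at `σ i = 0` is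
therefore the mean of its values at `σ i = 1` and `σ i = -1`, one of which is at least as large.
Starting from `σ = 0`, where the determinant is `1`, each zero entry can thus be replaced in turn
by a sign while the determinant stays nonnegative. -/

/-- The determinant of `1 - S * diagonal σ` is an affine function of the entry `σ i`. -/
lemma det_one_sub_mul_diagonal_update {n : Type*} [Fintype n] [DecidableEq n]
    (S : Matrix n n ℝ) (σ : n → ℝ) (i : n) :
    ∃ a b : ℝ, ∀ c : ℝ,
      (1 - S * Matrix.diagonal (Function.update σ i c)).det = a + c * b := by
  refine ⟨((1 - S * Matrix.diagonal σ).updateCol i fun k => (1 : Matrix n n ℝ) k i).det,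
    ((1 - S * Matrix.diagonal σ).updateCol i fun k => -S k i).det, fun c => ?_⟩
  rw [← Matrix.det_updateCol_smul, ← Matrix.det_updateCol_add]
  congr 1
  ext k j
  by_cases h : j = i
  · subst h
    simp [Matrix.mul_diagonal]
    ring
  · simp [Matrix.mul_diagonal, h]

/-- The paper's remark: the `2^s` determinants `det(I − S·Σ)`, with `Σ` ranging
over all signature matrices, cannot all be negative; i.e. there is a signature
matrix `Σ` with `det(I − S·Σ) ≥ 0`. -/
theorem exists_signature_with_nonneg_det
    (s : ℕ) (S : Matrix (Fin s) (Fin s) ℝ) :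
    ∃ σ : Fin s → ℝ, (∀ i, σ i = 1 ∨ σ i = -1) ∧
      0 ≤ (1 - S * Matrix.diagonal σ).det := by
  -- The entries outside `T` stay zero, so that the next entry to be replaced is a midpoint.
  have key : ∀ T : Finset (Fin s), ∃ σ : Fin s → ℝ,
      (∀ i ∈ T, σ i = 1 ∨ σ i = -1) ∧ (∀ i ∉ T, σ i = 0) ∧
      0 ≤ (1 - S * Matrix.diagonal σ).det := by
    intro T
    induction T using Finset.induction_on with
    | empty => exact ⟨fun _ => 0, by simp, by simp, by simp⟩
    | insert i T hi ih =>
      obtain ⟨σ, h1, h0, hd⟩ := ih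
      obtain ⟨a, b, hab⟩ := det_one_sub_mul_diagonal_update S σ i
      have ha : 0 ≤ a := by
        have h := hab 0
        rw [← h0 i hi, Function.update_eq_self, h0 i hi] at h
        linarith
      obtain ⟨c, hc, hcd⟩ : ∃ c : ℝ, (c = 1 ∨ c = -1) ∧ 0 ≤ a + c * b := by
        rcases le_total 0 b with hb | hb
        · exact ⟨1, Or.inl rfl, by linarith⟩
        · exact ⟨-1, Or.inr rfl, by linarith⟩
      refine ⟨Function.update σ i c, fun j hj => ?_, fun j hj => ?_, by rwa [hab]⟩
      · by_cases h : j = i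
        · subst h
          simpa using hc
        · simpa [h] using h1 j (Finset.mem_of_mem_insert_of_ne hj h)
      · have hj' : j ≠ i ∧ j ∉ T := by simpa using hj
        simpa [hj'.1] using h0 j hj'.2
  obtain ⟨σ, h1, -, hd⟩ := key Finset.univ
  exact ⟨σ, fun i => h1 i (Finset.mem_univ i), hd⟩
end

section
/- Let n ∈ ℕ and let F : ℝⁿ → ℝⁿ be continuous and suppose there is a finite nonempty family of affine maps F_i(x) = A_i·x + b_i whose linear parts A_i are all invertible with determinants of the same sign, such that for every x ∈ ℝⁿ, F(x) = F_i(x) for some i (F is piecewise linear and coherently oriented on all of ℝⁿ). Let c = max_i ‖A_i⁻¹‖ (operator norm). Then F is metrically regular on ℝⁿ with constant c: for all x, y ∈ ℝⁿ the preimage F⁻¹(y) is nonempty and the distance from x to F⁻¹(y) satisfies dist(x, F⁻¹(y)) ≤ c·‖y − F(x)‖. -/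
/-!
A generic line segment can be lifted through `F`. Call a point singular when two coincidence
conditions among affine pieces that hold there cut out a flat of codimension at least two. The
`F`-image of the singular points lies in a finite union of flats of codimension at least two, so
for a dense set of starting points `x`, and then a dense set of targets `y`, the segment from `F x`
to `y` misses it (`dense_pieces_avoid`, `dense_segment_avoids`).

At a nonsingular point `z` at most one hyperplane separates the pieces active at `z`, and `F` is a
single affine piece on each side of it. Equality of the signs of the determinants makes the vectors
`(A i)⁻¹ v`, for `i` active at `z`, all point to the same side
or all lie in the hyperplane, so one of them can be followed for a
short time while `F` moves exactly in the direction `v` (`exists_direction`).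

Following these directions lifts the segment from `F x` to `y` to a motion starting at `x` whose
speed is at most `c * ‖y - F x‖`; the lift reaches `F z = y` with `‖z - x‖ ≤ c * ‖y - F x‖`
(`mem_regularPairs_of_segment`). The set of pairs `(x, y)` admitting such a `z` is closed by
compactness, hence it is everything (`regularPairs_eq_univ`).
-/

open Filter Topology Module

section
variable {E : Type*} [NormedAddCommGroup E] [NormedSpace ℝ E] [FiniteDimensional ℝ E]

set_option linter.unusedSectionVars false

/-! ### Moving in a prescribed direction from a nonsingular point -/

/-- If `B` and `C` agree on the hyperplane `ker l` and have determinants of the same sign, then the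
solutions `h`, `h'` of `B h = v` and `C h' = v` lie on the same side of that hyperplane: `B` is `C`
composed with a transvection `x ↦ x + l x • u`, whose determinant is `1 + l u`. -/
lemma pos_of_det_pos (B C : E ≃L[ℝ] E)
    (hdet : 0 < LinearMap.det ((B : E →L[ℝ] E) : E →ₗ[ℝ] E) *
      LinearMap.det ((C : E →L[ℝ] E) : E →ₗ[ℝ] E))
    (l : E →ₗ[ℝ] ℝ) (hl : ∀ x, l x = 0 → B x = C x) {h h' : E} (hBC : B h = C h')
    (hpos : 0 < l h) : 0 < l h' := by
  set e : E := (l h)⁻¹ • h with he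
  have hle : l e = 1 := by simp [he, hpos.ne']
  set u : E := C.symm (B e) - e with hu
  have hB : ∀ x, B x = C (x + l x • u) := by
    intro x
    have h1 := hl (x - l x • e) (by simp [hle])
    simp only [map_sub, map_smul] at h1
    simp only [hu, map_add, map_smul, map_sub, ContinuousLinearEquiv.apply_symm_apply, smul_sub]
    linear_combination (norm := module) h1
  have hcomp : ((B : E →L[ℝ] E) : E →ₗ[ℝ] E) =
      ((C : E →L[ℝ] E) : E →ₗ[ℝ] E) ∘ₗ LinearMap.transvection l u := by
    ext x
    simpa [LinearMap.transvection] using hB x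
  rw [hcomp, LinearMap.det_comp, LinearMap.transvection.det] at hdet
  have h2 : 0 < 1 + l u := by
    by_contra! hneg
    nlinarith [sq_nonneg (LinearMap.det ((C : E →L[ℝ] E) : E →ₗ[ℝ] E))]
  have h3 : h' = h + l h • u := C.injective (by rw [← hBC, hB])
  rw [h3, map_add, map_smul, smul_eq_mul]
  nlinarith

/-- For `q = ((i, j), (i', j'))`: the subspace on which `A i = A j` and `A i' = A j'` has codimension
at least two. The case `(i, j) = (i', j')` is included, so a coincidence locus of a single pair with
codimension at least two is covered. -/
def SingularQuad {ι : Type*} (A : ι → E ≃L[ℝ] E) (q : (ι × ι) × (ι × ι)) : Prop :=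
  finrank ℝ ↥(LinearMap.eqLocus (A q.1.1 : E →ₗ[ℝ] E) (A q.1.2 : E →ₗ[ℝ] E) ⊓
    LinearMap.eqLocus (A q.2.1 : E →ₗ[ℝ] E) (A q.2.2 : E →ₗ[ℝ] E)) + 2 ≤ finrank ℝ E

/-- On a preconnected set where distinct pieces never agree with `F` at the same point, `F` is a
single affine piece: the coincidence sets form a finite closed cover. -/
lemma eqOn_of_isPreconnected {ι : Type*} [Finite ι] {A : ι → E ≃L[ℝ] E} {b : ι → E} {F : E → E}
    (hF : Continuous F) {S : Set E} (hS : IsPreconnected S)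
    (hsel : ∀ x ∈ S, ∃ i, F x = A i x + b i)
    (huniq : ∀ x ∈ S, ∀ i j, F x = A i x + b i → F x = A j x + b j →
      ∀ w, A i w + b i = A j w + b j)
    {x₀ : E} (hx₀ : x₀ ∈ S) {i : ι} (hi : F x₀ = A i x₀ + b i) :
    ∀ x ∈ S, F x = A i x + b i := by
  by_contra! hcon
  obtain ⟨x₁, hx₁, hne⟩ := hcon
  have hcl : ∀ j, IsClosed {x | F x = A j x + b j} := fun j =>
    isClosed_eq hF ((A j).continuous.add continuous_const)
  obtain ⟨j₁, hj₁⟩ := hsel x₁ hx₁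
  obtain ⟨w, hw, hw1, hw2⟩ := isPreconnected_closed_iff.1 hS {x | F x = A i x + b i}
    (⋃ j ∈ {j | ¬ ∀ w, A i w + b i = A j w + b j}, {x | F x = A j x + b j}) (hcl i)
    ((Set.toFinite _).isClosed_biUnion fun j _ => hcl j)
    (by
      intro x hx
      obtain ⟨j, hj⟩ := hsel x hx
      by_cases h : ∀ w, A i w + b i = A j w + b j
      · left
        simp only [Set.mem_ofPred_eq]
        rw [hj, h]
      · right
        exact Set.mem_biUnion (x := j) h hj)
    ⟨x₀, hx₀, hi⟩
    ⟨x₁, hx₁, Set.mem_biUnion (x := j₁) (fun h => hne (by rw [h, hj₁])) hj₁⟩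
  simp only [Set.mem_iUnion, Set.mem_ofPred_eq] at hw2
  obtain ⟨j, hj, hFj⟩ := hw2
  exact hj (huniq w hw i j hw1 hFj)

/-- At a point `z` lying on no singular flat, some `(A i)⁻¹ v` is a direction along which `F` moves
exactly with velocity `v` for a short time. -/
lemma exists_direction {ι : Type*} [Finite ι] {A : ι → E ≃L[ℝ] E} {b : ι → E} {F : E → E}
    (hF : Continuous F)
    (hdet : ∀ i j, 0 < LinearMap.det ((A i : E →L[ℝ] E) : E →ₗ[ℝ] E) *
      LinearMap.det ((A j : E →L[ℝ] E) : E →ₗ[ℝ] E))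
    (hsel : ∀ x, ∃ i, F x = A i x + b i) {z : E}
    (hz : ∀ q, SingularQuad A q →
      ¬ (A q.1.1 z + b q.1.1 = A q.1.2 z + b q.1.2 ∧ A q.2.1 z + b q.2.1 = A q.2.2 z + b q.2.2))
    (v : E) :
    ∃ i, ∀ᶠ s in 𝓝[>] (0 : ℝ), F (z + s • (A i).symm v) = F z + s • v := by
  -- near `z` only the pieces active at `z` occur
  have hact : ∀ᶠ x in 𝓝 z, ∀ j, F x = A j x + b j → F z = A j z + b j := by
    refine eventually_all.2 fun j => ?_
    by_cases h : F z = A j z + b j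
    · exact Eventually.of_forall fun _ _ => h
    · have : ∀ᶠ x in 𝓝 z, F x ≠ A j x + b j :=
        (isOpen_ne_fun hF ((A j).continuous.add continuous_const)).mem_nhds h
      exact this.mono fun x hx hx' => absurd hx' hx
  obtain ⟨r, hr, hball⟩ := Metric.eventually_nhds_iff_ball.1 hact
  have hsmall : ∀ h : E, ∀ᶠ s in 𝓝[>] (0 : ℝ), z + s • h ∈ Metric.ball z r := by
    intro h
    have : Tendsto (fun s : ℝ => z + s • h) (𝓝[>] 0) (𝓝 z) := by
      have h1 : Continuous fun s : ℝ => z + s • h := by fun_prop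
      simpa using (h1.tendsto 0).mono_left nhdsWithin_le_nhds
    exact this (Metric.ball_mem_nhds z hr)
  obtain ⟨i₀, hi₀⟩ := hsel z
  set h₀ := (A i₀).symm v with hh₀
  -- if all active pieces send `h₀` to `v`, following `h₀` works whichever of them `F` uses
  by_cases hflat : ∀ j, F z = A j z + b j → A j h₀ = v
  · refine ⟨i₀, (hsmall h₀).mono fun s hs => ?_⟩
    obtain ⟨j, hj⟩ := hsel (z + s • h₀)
    have hjz := hball _ hs j hj
    rw [hj, map_add, map_smul, hflat j hjz, hjz]
    abel
  push Not at hflat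
  obtain ⟨j₀, hj₀, hj₀v⟩ := hflat
  set H := LinearMap.eqLocus (A i₀ : E →ₗ[ℝ] E) (A j₀ : E →ₗ[ℝ] E) with hH
  have hh₀H : h₀ ∉ H := by
    intro hmem
    have : A i₀ h₀ = A j₀ h₀ := hmem
    exact hj₀v (by rw [← this, hh₀, ContinuousLinearEquiv.apply_symm_apply])
  obtain ⟨l, hl₀, hHl⟩ := Submodule.exists_le_ker_of_notMem hh₀H
  -- normalise `l` so that it is positive on `h₀`
  obtain ⟨l, hl₀, hHl⟩ : ∃ l : E →ₗ[ℝ] ℝ, 0 < l h₀ ∧ H ≤ LinearMap.ker l := by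
    rcases lt_or_gt_of_ne hl₀ with h | h
    · exact ⟨-l, by simpa using h, fun x hx => by simpa using hHl hx⟩
    · exact ⟨l, h, hHl⟩
  have hkerlt : finrank ℝ (LinearMap.ker l) < finrank ℝ E :=
    Submodule.finrank_lt fun h => hl₀.ne' (by
      have : h₀ ∈ LinearMap.ker l := h ▸ Submodule.mem_top
      simpa using this)
  -- two distinct pieces active at `z` agree, in linear part, exactly on `ker l`
  have hpair : ∀ i j, F z = A i z + b i → F z = A j z + b j → (∃ w, A i w ≠ A j w) →
      LinearMap.eqLocus (A i : E →ₗ[ℝ] E) (A j : E →ₗ[ℝ] E) = LinearMap.ker l := by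
    rintro i j hi hj ⟨w, hw⟩
    set K := LinearMap.eqLocus (A i : E →ₗ[ℝ] E) (A j : E →ₗ[ℝ] E) with hK
    have hns : ¬ SingularQuad A ((i₀, j₀), (i, j)) := fun h =>
      hz _ h ⟨hi₀.symm.trans hj₀, hi.symm.trans hj⟩
    have hge : finrank ℝ E < finrank ℝ ↥(H ⊓ K) + 2 := not_le.1 hns
    have hKlt : finrank ℝ K < finrank ℝ E :=
      Submodule.finrank_lt fun h => hw (by
        have : w ∈ K := h ▸ Submodule.mem_top
        exact this)
    have e1 : H ⊓ K = K := Submodule.eq_of_le_of_finrank_le inf_le_right (by omega)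
    have e2 : H ⊓ K = LinearMap.ker l :=
      Submodule.eq_of_le_of_finrank_le (inf_le_left.trans hHl) (by omega)
    exact e1.symm.trans e2
  have hsub : ∀ i j, F z = A i z + b i → F z = A j z + b j → ∀ x, l x = 0 → A i x = A j x := by
    intro i j hi hj x hx
    by_contra hne
    have : x ∈ LinearMap.eqLocus (A i : E →ₗ[ℝ] E) (A j : E →ₗ[ℝ] E) := by
      rw [hpair i j hi hj ⟨x, hne⟩]; simpa using hx
    exact hne this
  -- the half-ball on the positive side of the hyperplane, where `F` is a single affine piece
  set S : Set E := Metric.ball z r ∩ {x | l z < l x} with hS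
  have hSconv : Convex ℝ S := (convex_ball z r).inter (convex_halfSpace_gt l.isLinear _)
  have hmemS : ∀ h, 0 < l h → ∀ᶠ s in 𝓝[>] (0 : ℝ), z + s • h ∈ S := by
    intro h hlh
    filter_upwards [hsmall h, self_mem_nhdsWithin] with s hs hs0
    refine ⟨hs, ?_⟩
    have : 0 < s * l h := mul_pos hs0 hlh
    simpa using this
  obtain ⟨s₀, hs₀⟩ := (hmemS h₀ hl₀).exists
  obtain ⟨i, hi⟩ := hsel (z + s₀ • h₀)
  have hiz := hball _ hs₀.1 i hi
  have hside := eqOn_of_isPreconnected hF hSconv.isPreconnected (fun x _ => hsel x)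
    (by
      intro x hx i j hi hj
      have hiz := hball _ hx.1 i hi
      have hjz := hball _ hx.1 j hj
      by_contra hne
      have hne' : ∃ w, A i w ≠ A j w := by
        by_contra! hall
        refine hne fun w => ?_
        have := hiz.symm.trans hjz
        rw [hall z] at this
        rw [hall w, add_left_cancel this]
      have hmem : x - z ∈ LinearMap.eqLocus (A i : E →ₗ[ℝ] E) (A j : E →ₗ[ℝ] E) := by
        change A i (x - z) = A j (x - z)
        rw [map_sub, map_sub]
        linear_combination (norm := module) hj - hi + hiz - hjz
      rw [hpair i j hiz hjz hne', LinearMap.mem_ker, map_sub, sub_eq_zero] at hmem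
      exact (ne_of_gt hx.2) hmem)
    hs₀ hi
  have hli : 0 < l ((A i).symm v) :=
    pos_of_det_pos (A i₀) (A i) (hdet i₀ i) l (hsub i₀ i hi₀ hiz) (by simp [hh₀]) hl₀
  refine ⟨i, (hmemS _ hli).mono fun s hs => ?_⟩
  rw [hside _ hs, map_add, map_smul, ContinuousLinearEquiv.apply_symm_apply, hiz]
  abel

/-! ### Solvability with a distance bound, and path lifting -/

/-- The pairs `(x, y)` for which the equation `F z = y` has a solution with
`‖z - x‖ ≤ c * ‖y - F x‖`. -/
def regularPairs (F : E → E) (c : ℝ) : Set (E × E) :=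
  {p | ∃ z, F z = p.2 ∧ ‖z - p.1‖ ≤ c * ‖p.2 - F p.1‖}

lemma isClosed_regularPairs {F : E → E} (hF : Continuous F) (c : ℝ) :
    IsClosed (regularPairs F c) := by
  refine isSeqClosed_iff_isClosed.1 fun u p hu hup => ?_
  choose z hz hzb using hu
  have h1 : Tendsto (fun n => (u n).1) atTop (𝓝 p.1) := (continuous_fst.tendsto p).comp hup
  have h2 : Tendsto (fun n => (u n).2) atTop (𝓝 p.2) := (continuous_snd.tendsto p).comp hup
  have h3 : Tendsto (fun n => c * ‖(u n).2 - F (u n).1‖) atTop (𝓝 (c * ‖p.2 - F p.1‖)) :=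
    ((h2.sub ((hF.tendsto _).comp h1)).norm).const_mul c
  have hb : ∃ R, ∀ n, z n ∈ Metric.closedBall (0 : E) R := by
    obtain ⟨R₁, hR₁⟩ := h1.norm.bddAbove_range
    obtain ⟨R₂, hR₂⟩ := h3.bddAbove_range
    refine ⟨R₂ + R₁, fun n => ?_⟩
    have e1 := hR₁ (Set.mem_range_self n)
    have e2 := hR₂ (Set.mem_range_self n)
    have e3 := hzb n
    have e4 := norm_add_le (z n - (u n).1) (u n).1
    rw [sub_add_cancel] at e4
    simp only [mem_closedBall_zero_iff]
    linarith
  obtain ⟨R, hR⟩ := hb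
  obtain ⟨w, -, φ, hφ, hw⟩ := (isCompact_closedBall (0 : E) R).tendsto_subseq hR
  refine ⟨w, ?_, ?_⟩
  · refine tendsto_nhds_unique ((hF.tendsto w).comp hw) ?_
    refine (h2.comp hφ.tendsto_atTop).congr fun n => ?_
    simp [hz]
  · exact le_of_tendsto_of_tendsto' (hw.sub (h1.comp hφ.tendsto_atTop)).norm
      (h3.comp hφ.tendsto_atTop) fun n => hzb _

/-- Path lifting: if from every point above the segment from `F x` to `y` one can move so that `F`
advances along the segment, then the end of the segment is reached, at distance at most
`c * ‖y - F x‖` from `x`. -/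
lemma mem_regularPairs_of_segment {ι : Type*} {A : ι → E ≃L[ℝ] E} {F : E → E} (hF : Continuous F)
    {c : ℝ} (hc : ∀ i, ‖((A i).symm : E →L[ℝ] E)‖ ≤ c) (x y : E)
    (hdir : ∀ z, ∀ t ∈ Set.Icc (0 : ℝ) 1, F z = F x + t • (y - F x) →
      ∃ i, ∀ᶠ s in 𝓝[>] (0 : ℝ), F (z + s • (A i).symm (y - F x)) = F z + s • (y - F x)) :
    (x, y) ∈ regularPairs F c := by
  set v := y - F x with hv
  -- `‖F x + t • v - F x‖ = t * ‖v‖`, so membership for `t` bounds the length of the lift up to `t`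
  have hclosed : IsClosed {t : ℝ | (x, F x + t • v) ∈ regularPairs F c} :=
    (isClosed_regularPairs hF c).preimage (f := fun t : ℝ => (x, F x + t • v)) (by fun_prop)
  have h1 : (1 : ℝ) ∈ {t : ℝ | (x, F x + t • v) ∈ regularPairs F c} := by
    refine (hclosed.inter isClosed_Icc).mem_of_ge_of_forall_exists_gt (a := 0)
      ⟨x, by simp⟩ zero_le_one ?_
    rintro t ⟨⟨z, hz, hzb⟩, ht0, ht1⟩
    simp only [add_sub_cancel_left, norm_smul, Real.norm_of_nonneg ht0] at hz hzb
    obtain ⟨i, hi⟩ := hdir z t ⟨ht0, ht1.le⟩ hz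
    obtain ⟨s, hs, hs0, hs1⟩ :=
      (hi.and (Ioc_mem_nhdsGT (sub_pos.2 ht1))).exists
    refine ⟨t + s, ⟨z + s • (A i).symm v, ?_, ?_⟩, by linarith, by linarith⟩
    · simp only [hs, hz, add_smul, add_assoc]
    · have e1 : ‖(A i).symm v‖ ≤ c * ‖v‖ :=
        (((A i).symm : E →L[ℝ] E).le_opNorm v).trans
          (mul_le_mul_of_nonneg_right (hc i) (norm_nonneg v))
      simp only [add_sub_cancel_left, norm_smul, Real.norm_of_nonneg (add_nonneg ht0 hs0.le)]
      calc ‖z + s • (A i).symm v - x‖ = ‖(z - x) + s • (A i).symm v‖ := by congr 1; abel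
        _ ≤ ‖z - x‖ + ‖s • (A i).symm v‖ := norm_add_le _ _
        _ = ‖z - x‖ + s * ‖(A i).symm v‖ := by rw [norm_smul, Real.norm_of_nonneg hs0.le]
        _ ≤ c * (t * ‖v‖) + s * (c * ‖v‖) := by gcongr
        _ = c * ((t + s) * ‖v‖) := by ring
  simpa [hv] using h1

/-! ### Generic segments -/

lemma dense_notMem_affineSubspace {κ : Type*} [Finite κ] (P : κ → AffineSubspace ℝ E)
    (hP : ∀ k, P k ≠ ⊤) : Dense {x | ∀ k, x ∉ P k} := by
  borelize E
  refine MeasureTheory.Measure.dense_of_ae (μ := MeasureTheory.Measure.addHaar) ?_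
  exact MeasureTheory.ae_all_iff.2 fun k =>
    MeasureTheory.measure_eq_zero_iff_ae_notMem.1
      (MeasureTheory.Measure.addHaar_affineSubspace _ (P k) (hP k))

lemma mk'_ne_top {p : E} {V : Submodule ℝ E} (hV : finrank ℝ V < finrank ℝ E) :
    AffineSubspace.mk' p V ≠ ⊤ := by
  intro h
  have := congrArg AffineSubspace.direction h
  rw [AffineSubspace.direction_mk', AffineSubspace.direction_top] at this
  rw [this, finrank_top] at hV
  exact hV.false

/-- A point `y` for which the segment from `a` to `y` meets `p k + V k` lies in the flat spanned by
`a` and `p k + V k`, which is proper since `V k` has codimension at least two. -/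
lemma dense_segment_avoids {κ : Type*} [Finite κ] (p : κ → E) (V : κ → Submodule ℝ E)
    (hV : ∀ k, finrank ℝ (V k) + 2 ≤ finrank ℝ E) {a : E} (ha : ∀ k, a - p k ∉ V k) :
    Dense {y | ∀ k, ∀ t ∈ Set.Icc (0 : ℝ) 1, a + t • (y - a) - p k ∉ V k} := by
  refine (dense_notMem_affineSubspace
    (fun k => AffineSubspace.mk' (p k) (V k ⊔ ℝ ∙ (a - p k))) fun k => mk'_ne_top ?_).mono ?_
  · have h1 := Submodule.finrank_add_le_finrank_add_finrank (V k) (ℝ ∙ (a - p k))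
    have h2 := finrank_span_singleton (K := ℝ) (v := a - p k) fun h => ha k (h ▸ (V k).zero_mem)
    have := hV k
    omega
  · intro y hy k t ht hmem
    rcases eq_or_ne t 0 with rfl | ht0
    · exact ha k (by simpa using hmem)
    · refine hy k ?_
      rw [AffineSubspace.mem_mk', vsub_eq_sub]
      have h3 : y - p k = t⁻¹ • (a + t • (y - a) - p k) + (1 - t⁻¹) • (a - p k) := by
        match_scalars <;> field_simp <;> ring
      rw [h3]
      exact Submodule.add_mem_sup (Submodule.smul_mem _ _ hmem)
        (Submodule.smul_mem _ _ (Submodule.mem_span_singleton_self _))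

lemma dense_pieces_avoid {ι κ : Type*} [Finite ι] [Finite κ] (A : ι → E ≃L[ℝ] E) (b : ι → E)
    (p : κ → E) (V : κ → Submodule ℝ E) (hV : ∀ k, finrank ℝ (V k) < finrank ℝ E) :
    Dense {x | ∀ i k, A i x + b i - p k ∉ V k} := by
  refine (dense_notMem_affineSubspace (κ := ι × κ)
    (fun q => AffineSubspace.mk' ((A q.1).symm (p q.2 - b q.1))
      ((V q.2).map ((A q.1).symm.toLinearEquiv : E →ₗ[ℝ] E)))
    fun q => mk'_ne_top ?_).mono ?_
  · rw [LinearEquiv.finrank_map_eq]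
    exact hV _
  · intro x hx i k hmem
    refine hx (i, k) ?_
    rw [AffineSubspace.mem_mk', vsub_eq_sub]
    refine ⟨_, hmem, ?_⟩
    simp [sub_eq_add_neg]
    abel

/-! ### Metric regularity -/

lemma regularPairs_eq_univ {ι : Type*} [Finite ι] {A : ι → E ≃L[ℝ] E} {b : ι → E} {F : E → E}
    (hF : Continuous F)
    (hdet : ∀ i j, 0 < LinearMap.det ((A i : E →L[ℝ] E) : E →ₗ[ℝ] E) *
      LinearMap.det ((A j : E →L[ℝ] E) : E →ₗ[ℝ] E))
    (hsel : ∀ x, ∃ i, F x = A i x + b i) {c : ℝ}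
    (hc : ∀ i, ‖((A i).symm : E →L[ℝ] E)‖ ≤ c) : regularPairs F c = Set.univ := by
  let Flat (q : (ι × ι) × (ι × ι)) : Set E :=
    {z | A q.1.1 z + b q.1.1 = A q.1.2 z + b q.1.2 ∧ A q.2.1 z + b q.2.1 = A q.2.2 z + b q.2.2}
  -- the flats indexed by `κ` are the images, under all pieces, of the nonempty singular flats
  let κ := {q // SingularQuad A q ∧ (Flat q).Nonempty} × ι
  choose z₀ hz₀ using fun k : κ => k.1.2.2
  let p : κ → E := fun k => A k.2 (z₀ k) + b k.2
  let V : κ → Submodule ℝ E := fun k =>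
    (LinearMap.eqLocus (A k.1.1.1.1 : E →ₗ[ℝ] E) (A k.1.1.1.2 : E →ₗ[ℝ] E) ⊓
      LinearMap.eqLocus (A k.1.1.2.1 : E →ₗ[ℝ] E) (A k.1.1.2.2 : E →ₗ[ℝ] E)).map
      ((A k.2).toLinearEquiv : E →ₗ[ℝ] E)
  have hV : ∀ k, finrank ℝ (V k) + 2 ≤ finrank ℝ E := fun k => by
    have := k.1.2.1
    simpa only [V, LinearEquiv.finrank_map_eq, SingularQuad] using this
  -- a singular point is mapped into one of the flats `p k + V k`
  have hsing : ∀ z q, SingularQuad A q → z ∈ Flat q → ∃ k, F z - p k ∈ V k := by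
    intro z q hq hz
    obtain ⟨m, hm⟩ := hsel z
    let k : κ := (⟨q, hq, z, hz⟩, m)
    refine ⟨k, z - z₀ k, ⟨?_, ?_⟩, ?_⟩
    · have h1 := hz.1
      have h2 : A q.1.1 (z₀ k) + b q.1.1 = A q.1.2 (z₀ k) + b q.1.2 := (hz₀ k).1
      change A q.1.1 (z - z₀ k) = A q.1.2 (z - z₀ k)
      rw [map_sub, map_sub]
      linear_combination (norm := module) h1 - h2
    · have h1 := hz.2
      have h2 : A q.2.1 (z₀ k) + b q.2.1 = A q.2.2 (z₀ k) + b q.2.2 := (hz₀ k).2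
      change A q.2.1 (z - z₀ k) = A q.2.2 (z - z₀ k)
      rw [map_sub, map_sub]
      linear_combination (norm := module) h1 - h2
    · change A m (z - z₀ k) = F z - (A m (z₀ k) + b m)
      rw [hm, map_sub]
      abel
  have hD : Dense (regularPairs F c) := by
    rw [Metric.dense_iff]
    rintro ⟨x, y⟩ r hr
    obtain ⟨x', hx'r, hx'⟩ := Metric.dense_iff.1
      (dense_pieces_avoid A b p V fun k => by have := hV k; omega) x r hr
    have ha : ∀ k, F x' - p k ∉ V k := fun k => by
      obtain ⟨m, hm⟩ := hsel x'
      rw [hm]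
      exact hx' m k
    obtain ⟨y', hy'r, hy'⟩ := Metric.dense_iff.1 (dense_segment_avoids p V hV ha) y r hr
    refine ⟨(x', y'), ?_, ?_⟩
    · rw [← ball_prod_same]
      exact ⟨hx'r, hy'r⟩
    · refine mem_regularPairs_of_segment hF hc x' y' fun z t ht hz => ?_
      refine exists_direction hF hdet hsel (fun q hq hzq => ?_) _
      obtain ⟨k, hk⟩ := hsing z q hq hzq
      rw [hz] at hk
      exact hy' k t ht hk
  rw [← (isClosed_regularPairs hF c).closure_eq]
  exact hD.closure_eq
end

/-- The paper's remark on metric regularity, specialized to `D = ℝⁿ`: a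
continuous piecewise linear function whose selection functions have invertible
linear parts with determinants of the same sign is metrically regular on all
of `ℝⁿ` with constant `c = max_i ‖A_i⁻¹‖`. -/
theorem coherently_oriented_PL_is_metrically_regular
    (n : ℕ) (F : EuclideanSpace ℝ (Fin n) → EuclideanSpace ℝ (Fin n))
    (hF : Continuous F)
    (k : ℕ) (hk : 0 < k)
    (A : Fin k → (EuclideanSpace ℝ (Fin n) ≃L[ℝ] EuclideanSpace ℝ (Fin n)))
    (b : Fin k → EuclideanSpace ℝ (Fin n))
    (hdet : ∀ i j : Fin k,
      0 < LinearMap.det ((A i : EuclideanSpace ℝ (Fin n) →L[ℝ] EuclideanSpace ℝ (Fin n)) :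
            EuclideanSpace ℝ (Fin n) →ₗ[ℝ] EuclideanSpace ℝ (Fin n)) *
          LinearMap.det ((A j : EuclideanSpace ℝ (Fin n) →L[ℝ] EuclideanSpace ℝ (Fin n)) :
            EuclideanSpace ℝ (Fin n) →ₗ[ℝ] EuclideanSpace ℝ (Fin n)))
    (hsel : ∀ x, ∃ i, F x = A i x + b i)
    (c : ℝ)
    (hc : c = Finset.univ.sup' (Finset.univ_nonempty_iff.mpr ⟨⟨0, hk⟩⟩)
      (fun i => ‖((A i).symm : EuclideanSpace ℝ (Fin n) →L[ℝ] EuclideanSpace ℝ (Fin n))‖)) :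
    ∀ x y : EuclideanSpace ℝ (Fin n),
      (F ⁻¹' {y}).Nonempty ∧ Metric.infDist x (F ⁻¹' {y}) ≤ c * ‖y - F x‖ := by
  intro x y
  have hle : ∀ i, ‖((A i).symm : EuclideanSpace ℝ (Fin n) →L[ℝ] EuclideanSpace ℝ (Fin n))‖ ≤ c := by
    intro i
    rw [hc]
    exact Finset.le_sup' (fun i => ‖((A i).symm :
      EuclideanSpace ℝ (Fin n) →L[ℝ] EuclideanSpace ℝ (Fin n))‖) (Finset.mem_univ i)
  have huniv : regularPairs F c = Set.univ := regularPairs_eq_univ hF hdet hsel hle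
  have hxy : (x, y) ∈ regularPairs F c := huniv ▸ Set.mem_univ (x, y)
  obtain ⟨z, hz, hzb⟩ := hxy
  have hmem : z ∈ F ⁻¹' {y} := Set.mem_preimage.2 (Set.mem_singleton_iff.2 hz)
  have hdist : dist x z ≤ c * ‖y - F x‖ := by
    rw [dist_comm, dist_eq_norm]
    exact hzb
  exact ⟨⟨z, hmem⟩, (Metric.infDist_le_dist_of_mem hmem).trans hdist⟩
end

section
/- Define f : ℝ² → ℝ² by f(x,y) = (x + max(y² − max(x,0), 0), y). Then for every ε > 0 there exists a point p ∈ ℝ² with 0 < ‖p‖ < ε such that f is Fréchet differentiable at p and the derivative of f at p is not invertible. In other words, every neighborhood of the root (0,0) of f contains points at which f is differentiable with singular Jacobian. -/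
/-!
The open region `0 < x < y²` accumulates at the origin, and on it the two positive parts are
active, so that `f (x, y) = (y², y)`. This map is smooth and independent of `x`; hence its
derivative has the vector `(1, 0)` in its kernel at every point of the region.
-/

/-- Every neighborhood of the root `(0,0)` of the paper's counterexample
function `f(x,y) = (x + (y² − x₊)₊, y)` contains points where `f` is
differentiable with singular (non-invertible) Jacobian. -/
theorem counterexample_singular_points_near_root
    (f : ℝ × ℝ → ℝ × ℝ)
    (hf : ∀ p : ℝ × ℝ, f p = (p.1 + max (p.2 ^ 2 - max p.1 0) 0, p.2)) :
    ∀ ε : ℝ, 0 < ε → ∃ p : ℝ × ℝ, 0 < ‖p‖ ∧ ‖p‖ < ε ∧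
      DifferentiableAt ℝ f p ∧ ¬ Function.Bijective ⇑(fderiv ℝ f p) := by
  intro ε hε
  -- The point `(d² / 2, d)` lies in the open region `0 < x < y²`, and `d ≤ 1` makes its
  -- sup norm equal to `d`.
  obtain ⟨d, hd0, hd1, hdε⟩ : ∃ d : ℝ, 0 < d ∧ d ≤ 1 ∧ d < ε :=
    ⟨min (ε / 2) 1, by positivity, min_le_right _ _,
      (min_le_left _ _).trans_lt (half_lt_self hε)⟩
  have hnorm : ‖((d ^ 2 / 2, d) : ℝ × ℝ)‖ = d := by
    rw [Prod.norm_mk, Real.norm_of_nonneg (by positivity), Real.norm_of_nonneg hd0.le]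
    exact max_eq_right (by nlinarith)
  -- On that region `f` is `(x, y) ↦ (y², y)`, which does not depend on `x`.
  have heq : f =ᶠ[nhds (d ^ 2 / 2, d)] fun q => (q.2 ^ 2, q.2) := by
    have h1 : ∀ᶠ q : ℝ × ℝ in nhds (d ^ 2 / 2, d), 0 < q.1 :=
      continuous_fst.continuousAt.eventually_const_lt (by simp only; positivity)
    have h2 : ∀ᶠ q : ℝ × ℝ in nhds (d ^ 2 / 2, d), q.1 < q.2 ^ 2 :=
      (continuous_fst.continuousAt).eventually_lt (by fun_prop)
        (by simp only; nlinarith [pow_pos hd0 2])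
    filter_upwards [h1, h2] with q hq1 hq2
    rw [hf, max_eq_left hq1.le, max_eq_left (sub_nonneg.2 hq2.le)]
    simp
  have hsnd : HasFDerivAt (fun q : ℝ × ℝ => q.2) (ContinuousLinearMap.snd ℝ ℝ ℝ)
      (d ^ 2 / 2, d) := hasFDerivAt_snd
  have hder := ((hsnd.pow 2).prodMk hsnd).congr_of_eventuallyEq heq
  refine ⟨(d ^ 2 / 2, d), by rwa [hnorm], by rwa [hnorm], hder.differentiableAt, fun hb => ?_⟩
  rw [hder.fderiv] at hb
  -- The derivative kills `(1, 0)`.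
  have h10 : ((1, 0) : ℝ × ℝ) = (0, 0) := hb.1 (by simp)
  simp at h10
end
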